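/- arXiv:1912.04815 — 9 statements merged into one kernel-verified Lean document; each statement's English description precedes it below -/
import Mathlib

section
/- Let n ≥ 1, let P be an n×n nonnegative row sub-stochastic matrix, let w ∈ ℝ^n with w ≥ 0, and let c ∈ ℝ^n. Then the equilibrium set X(c) = {x ∈ ℝ^n : x = S_0^w(Pᵀx + c)} is nonempty, is contained in the lattice {y ∈ ℝ^n : 0 ≤ y ≤ w}, and admits a minimal element x̲ and a maximal element x̄ with respect to the entrywise partial order (i.e., x̲, x̄ ∈ X(c) and x̲ ≤ x ≤ x̄ for every x ∈ X(c)). -/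
open Matrix Finset Filter Topology

/-- The saturation function `S_0^w`. -/
def sat {n : ℕ} (w y : Fin n → ℝ) : Fin n → ℝ := fun i => min (max (y i) 0) (w i)

/-- `x` is an equilibrium of the network `(P, w)` with exogenous flow `c`. -/
def IsEquil {n : ℕ} (P : Matrix (Fin n) (Fin n) ℝ) (w c x : Fin n → ℝ) : Prop :=
  x = sat w (Pᵀ.mulVec x + c)

/-! Saturation is the lattice operation `y ↦ (y ⊔ 0) ⊓ w`, so for nonnegative `P` the equilibria are
the fixed points of a monotone map whose values lie in the order interval `[0, w]`. That interval is
a complete lattice, and Knaster–Tarski provides extremal fixed points in it. -/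

theorem sat_eq_sup_inf {n : ℕ} (w y : Fin n → ℝ) : sat w y = (y ⊔ 0) ⊓ w :=
  rfl

theorem monotone_mulVec_of_nonneg {m n R : Type*} [Fintype n] [Semiring R] [PartialOrder R]
    [IsOrderedRing R] {A : Matrix m n R} (hA : ∀ i j, 0 ≤ A i j) :
    Monotone A.mulVec :=
  fun _ _ h i => dotProduct_le_dotProduct_of_nonneg_left h (hA i)

theorem sup_inf_mem_Icc {α : Type*} [Lattice α] {a b : α} (hab : a ≤ b) (y : α) :
    (y ⊔ a) ⊓ b ∈ Set.Icc a b :=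
  ⟨le_inf le_sup_right hab, inf_le_right⟩

section

variable {α : Type*} [ConditionallyCompleteLattice α] {a b : α}

theorem exists_isLeast_isGreatest_fixedPoints_inter_Icc {f : α → α} (hab : a ≤ b)
    (hf : MonotoneOn f (Set.Icc a b)) (hmaps : Set.MapsTo f (Set.Icc a b) (Set.Icc a b)) :
    ∃ lo hi, IsLeast (Function.fixedPoints f ∩ Set.Icc a b) lo ∧
      IsGreatest (Function.fixedPoints f ∩ Set.Icc a b) hi := by
  have : Fact (a ≤ b) := ⟨hab⟩
  let F : Set.Icc a b →o Set.Icc a b :=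
    ⟨hmaps.restrict, fun x y hxy => hf x.2 y.2 hxy⟩
  have hF : Function.fixedPoints f ∩ Set.Icc a b = Subtype.val '' Function.fixedPoints F := by
    ext x
    constructor
    · rintro ⟨hfx, hx⟩
      exact ⟨⟨x, hx⟩, Subtype.ext hfx, rfl⟩
    · rintro ⟨y, hFy, rfl⟩
      exact ⟨congrArg Subtype.val hFy, y.2⟩
  rw [hF]
  exact ⟨F.lfp, F.gfp, (Subtype.mono_coe _).map_isLeast F.isLeast_lfp,
    (Subtype.mono_coe _).map_isGreatest F.isGreatest_gfp⟩

theorem equilibria_nonempty_min_max_general {g : α → α} (hg : MonotoneOn g (Set.Icc a b))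
    (hab : a ≤ b) :
    (∃ x, x = (g x ⊔ a) ⊓ b) ∧
    (∀ x, x = (g x ⊔ a) ⊓ b → a ≤ x ∧ x ≤ b) ∧
    (∃ xlo, xlo = (g xlo ⊔ a) ⊓ b ∧ ∀ x, x = (g x ⊔ a) ⊓ b → xlo ≤ x) ∧
    (∃ xhi, xhi = (g xhi ⊔ a) ⊓ b ∧ ∀ x, x = (g x ⊔ a) ⊓ b → x ≤ xhi) := by
  have hmem (x : α) (hx : x = (g x ⊔ a) ⊓ b) : x ∈ Set.Icc a b :=
    hx ▸ sup_inf_mem_Icc hab (g x)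
  have hmono : MonotoneOn (fun x => (g x ⊔ a) ⊓ b) (Set.Icc a b) :=
    (hg.sup monotoneOn_const).inf monotoneOn_const
  obtain ⟨lo, hi, ⟨⟨hlo, -⟩, hlo_le⟩, ⟨⟨hhi, -⟩, hle_hi⟩⟩ :=
    exists_isLeast_isGreatest_fixedPoints_inter_Icc hab hmono
      fun x _ => sup_inf_mem_Icc hab (g x)
  exact ⟨⟨lo, hlo.symm⟩, hmem, ⟨lo, hlo.symm, fun x hx => hlo_le ⟨hx.symm, hmem x hx⟩⟩,
    ⟨hi, hhi.symm, fun x hx => hle_hi ⟨hx.symm, hmem x hx⟩⟩⟩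

end

/-- for a nonnegative row sub-stochastic `P` and `w ≥ 0`, the equilibrium set is
nonempty, contained in `{y : 0 ≤ y ≤ w}`, and has a minimal and a maximal element. -/
theorem equilibria_nonempty_min_max
    {n : ℕ} (hn : 1 ≤ n) (P : Matrix (Fin n) (Fin n) ℝ)
    (hP : ∀ i j, 0 ≤ P i j) (hsub : ∀ i, ∑ j, P i j ≤ 1)
    (w : Fin n → ℝ) (hw : 0 ≤ w) (c : Fin n → ℝ) :
    (∃ x, IsEquil P w c x) ∧
    (∀ x, IsEquil P w c x → 0 ≤ x ∧ x ≤ w) ∧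
    (∃ xlo, IsEquil P w c xlo ∧ ∀ x, IsEquil P w c x → xlo ≤ x) ∧
    (∃ xhi, IsEquil P w c xhi ∧ ∀ x, IsEquil P w c x → x ≤ xhi) := by
  simp only [IsEquil, sat_eq_sup_inf]
  exact equilibria_nonempty_min_max_general
    (((monotone_mulVec_of_nonneg fun i j => hP j i).add_const c).monotoneOn _) hw
end

section
/- Let n ≥ 1, let P be an n×n nonnegative row sub-stochastic matrix, let w ∈ ℝ^n with w ≥ 0, and let c ∈ ℝ^n. Define the sequence x(0) = 0 and x(t+1) = S_0^w(Pᵀx(t) + c) for t ≥ 0. Then the sequence x(t) is entrywise nondecreasing and converges, as t → ∞, to the minimal equilibrium x̲ of the network (P, w) with exogenous flow c (i.e., its limit x̲ satisfies x̲ = S_0^w(Pᵀx̲ + c) and x̲ ≤ x for every x with x = S_0^w(Pᵀx + c)). -/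
open Matrix Finset Filter Topology

/-!
For nonnegative `P` the update map `x ↦ S_0^w(Pᵀx + c)` is monotone, continuous, and maps
everything into the order interval `[0, w]`. So `0` is a sub-solution and `w` a super-solution,
and Kleene iteration applies: the iterates of `0` increase, stay below `w`, and hence converge to a
fixed point. Every equilibrium is nonnegative, so by monotonicity it dominates all iterates of `0`,
and therefore their limit.
-/

section Iteration

open Function

variable {α : Type*} {f : α → α} {a b l : α}

theorem eq_iterate_of_forall_succ_eq {x : ℕ → α} (hx : ∀ t, x (t + 1) = f (x t)) (t : ℕ) :
    x t = f^[t] (x 0) := by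
  induction t with
  | zero => rfl
  | succ t ih => rw [hx, ih, iterate_succ_apply']

theorem iterate_le_of_le_of_map_le [Preorder α] (hf : Monotone f) (hab : a ≤ b) (hb : f b ≤ b)
    (t : ℕ) : f^[t] a ≤ b :=
  calc
    f^[t] a ≤ f^[t] b := hf.iterate t hab
    _ ≤ b := hf.antitone_iterate_of_map_le hb t.zero_le

theorem exists_tendsto_iterate_of_le_map_of_map_le [ConditionallyCompletePartialOrderSup α]
    [TopologicalSpace α] [SupConvergenceClass α] (hf : Monotone f) (ha : a ≤ f a) (hab : a ≤ b)
    (hb : f b ≤ b) : ∃ l, Tendsto (fun t => f^[t] a) atTop (𝓝 l) :=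
  ⟨_, tendsto_atTop_ciSup (hf.monotone_iterate_of_le_map ha)
    ⟨b, Set.forall_mem_range.2 (iterate_le_of_le_of_map_le hf hab hb)⟩⟩

theorem isLeast_fixedPoints_inter_Ici_of_tendsto_iterate [PartialOrder α] [TopologicalSpace α]
    [OrderClosedTopology α] (hf : Monotone f) (ha : a ≤ f a) (hfl : ContinuousAt f l)
    (hl : Tendsto (fun t => f^[t] a) atTop (𝓝 l)) : IsLeast (fixedPoints f ∩ Set.Ici a) l := by
  refine ⟨⟨isFixedPt_of_tendsto_iterate hl hfl, ?_⟩, fun y ⟨hy, hay⟩ => ?_⟩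
  · exact (hf.monotone_iterate_of_le_map ha).ge_of_tendsto hl 0
  · exact le_of_tendsto' hl (iterate_le_of_le_of_map_le hf hay hy.le)

end Iteration

section Saturation

variable {n : ℕ} {w : Fin n → ℝ}

theorem sat_nonneg (hw : 0 ≤ w) (y : Fin n → ℝ) : 0 ≤ sat w y :=
  fun i => le_min (le_max_right _ _) (hw i)

theorem sat_le (w y : Fin n → ℝ) : sat w y ≤ w :=
  fun _ => min_le_right _ _

theorem monotone_sat (w : Fin n → ℝ) : Monotone (sat w) :=
  fun _ _ hxy i => min_le_min_right _ (max_le_max_right _ (hxy i))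

theorem continuous_sat (w : Fin n → ℝ) : Continuous (sat w) := by
  unfold sat
  fun_prop

end Saturation

section Network

variable {n : ℕ} {P : Matrix (Fin n) (Fin n) ℝ} {w c x : Fin n → ℝ}

/-- The update map `x ↦ S_0^w(Pᵀx + c)` of the network `(P, w)` with exogenous flow `c`, whose
fixed points are the equilibria. -/
def networkMap (P : Matrix (Fin n) (Fin n) ℝ) (w c x : Fin n → ℝ) : Fin n → ℝ :=
  sat w (Pᵀ.mulVec x + c)

theorem isEquil_iff_mem_fixedPoints :
    IsEquil P w c x ↔ x ∈ Function.fixedPoints (networkMap P w c) :=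
  eq_comm

theorem IsEquil.nonneg (hw : 0 ≤ w) (hx : IsEquil P w c x) : 0 ≤ x :=
  (sat_nonneg hw _).trans_eq hx.symm

theorem monotone_networkMap (hP : ∀ i j, 0 ≤ P i j) (w c : Fin n → ℝ) :
    Monotone (networkMap P w c) :=
  (monotone_sat w).comp ((monotone_mulVec_of_nonneg fun i j => hP j i).add_const c)

theorem continuous_networkMap (P : Matrix (Fin n) (Fin n) ℝ) (w c : Fin n → ℝ) :
    Continuous (networkMap P w c) :=
  (continuous_sat w).comp ((continuous_const.matrix_mulVec continuous_id).add continuous_const)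

end Network

theorem iteration_from_zero_converges_to_minimal_general
    {n : ℕ} (P : Matrix (Fin n) (Fin n) ℝ) (hP : ∀ i j, 0 ≤ P i j)
    (w : Fin n → ℝ) (hw : 0 ≤ w) (c : Fin n → ℝ)
    (x : ℕ → Fin n → ℝ) (hx0 : x 0 = 0)
    (hxs : ∀ t, x (t + 1) = sat w (Pᵀ.mulVec (x t) + c)) :
    Monotone x ∧
    ∃ xlo : Fin n → ℝ, Tendsto x atTop (𝓝 xlo) ∧ IsEquil P w c xlo ∧
      ∀ y, IsEquil P w c y → xlo ≤ y := by
  have hmono : Monotone (networkMap P w c) := monotone_networkMap hP w c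
  have hzero : 0 ≤ networkMap P w c 0 := sat_nonneg hw _
  have hx : x = fun t => (networkMap P w c)^[t] 0 :=
    funext fun t => hx0 ▸ eq_iterate_of_forall_succ_eq hxs t
  obtain ⟨xlo, hlim⟩ := exists_tendsto_iterate_of_le_map_of_map_le hmono hzero hw (sat_le w _)
  have hleast := isLeast_fixedPoints_inter_Ici_of_tendsto_iterate hmono hzero
    (continuous_networkMap P w c).continuousAt hlim
  subst hx
  exact ⟨hmono.monotone_iterate_of_le_map hzero, xlo, hlim,
    isEquil_iff_mem_fixedPoints.2 hleast.1.1,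
    fun y hy => hleast.2 ⟨isEquil_iff_mem_fixedPoints.1 hy, hy.nonneg hw⟩⟩

/-- the iteration started at `0` is entrywise nondecreasing and converges to
the minimal equilibrium. -/
theorem iteration_from_zero_converges_to_minimal
    {n : ℕ} (hn : 1 ≤ n) (P : Matrix (Fin n) (Fin n) ℝ)
    (hP : ∀ i j, 0 ≤ P i j) (hsub : ∀ i, ∑ j, P i j ≤ 1)
    (w : Fin n → ℝ) (hw : 0 ≤ w) (c : Fin n → ℝ)
    (x : ℕ → Fin n → ℝ) (hx0 : x 0 = 0)
    (hxs : ∀ t, x (t + 1) = sat w (Pᵀ.mulVec (x t) + c)) :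
    Monotone x ∧
    ∃ xlo : Fin n → ℝ, Tendsto x atTop (𝓝 xlo) ∧ IsEquil P w c xlo ∧
      ∀ y, IsEquil P w c y → xlo ≤ y :=
  iteration_from_zero_converges_to_minimal_general P hP w hw c x hx0 hxs
end

section
/- Let n ≥ 1, let P be an n×n nonnegative row sub-stochastic matrix, let w ∈ ℝ^n with w ≥ 0, and let c ∈ ℝ^n. For an equilibrium x, define the partition of the index set {1,…,n} into the surplus set V_+^x = {i : c_i + (Pᵀx)_i > w_i}, the exposed set V_0^x = {i : 0 ≤ c_i + (Pᵀx)_i ≤ w_i}, and the deficit set V_-^x = {i : c_i + (Pᵀx)_i < 0}. Then this partition is the same for all equilibria: for any two equilibria x and y of the network (P, w) with exogenous flow c, V_+^x = V_+^y, V_0^x = V_0^y, and V_-^x = V_-^y. -/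
open Matrix Finset Filter Topology

/-!
Saturation does not increase the distance of two inflows at any node, while the passage from
states to inflows does not increase the total `ℓ¹` distance. For two equilibria these estimates
close up into a cycle, so saturation preserves the distance of the two inflows at every node.
Truncation to `[l, u]` strictly decreases the distance of two points as soon as exactly one of
them lies above `u`, or exactly one of them lies below `l`.
-/

section Truncation

variable {α : Type*} [AddCommGroup α] [LinearOrder α] [IsOrderedAddMonoid α]

lemma abs_min_max_sub_min_max_le (a b l u : α) :
    |min (max a l) u - min (max b l) u| ≤ |a - b| :=
  (abs_inf_sub_inf_le_abs _ _ _).trans (abs_sup_sub_sup_le_abs _ _ _)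

lemma abs_min_max_sub_min_max_lt_of_le_upper_of_upper_lt {a b l u : α} (hb : b ≤ u) (ha : u < a) :
    |min (max a l) u - min (max b l) u| < |a - b| :=
  have h_trunc : min (max a l) u = min (max u l) u := by
    rw [min_eq_right (ha.le.trans (le_max_left a l)), min_eq_right (le_max_left u l)]
  calc |min (max a l) u - min (max b l) u|
      = |min (max u l) u - min (max b l) u| := by rw [h_trunc]
    _ ≤ |u - b| := abs_min_max_sub_min_max_le u b l u
    _ = u - b := abs_of_nonneg (sub_nonneg.2 hb)
    _ < a - b := sub_lt_sub_right ha b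
    _ ≤ |a - b| := le_abs_self _

lemma abs_min_max_sub_min_max_lt_of_lt_lower_of_lower_le {a b l u : α} (ha : a < l) (hb : l ≤ b) :
    |min (max a l) u - min (max b l) u| < |a - b| :=
  have h_trunc : min (max a l) u = min (max l l) u := by rw [max_eq_right ha.le, max_self]
  calc |min (max a l) u - min (max b l) u|
      = |min (max l l) u - min (max b l) u| := by rw [h_trunc]
    _ ≤ |l - b| := abs_min_max_sub_min_max_le l b l u
    _ = b - l := by rw [abs_sub_comm, abs_of_nonneg (sub_nonneg.2 hb)]
    _ < b - a := sub_lt_sub_left ha b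
    _ ≤ |a - b| := (le_abs_self _).trans_eq (abs_sub_comm b a)

lemma upper_lt_iff_of_abs_min_max_sub_min_max_eq {a b l u : α}
    (h : |min (max a l) u - min (max b l) u| = |a - b|) : u < a ↔ u < b := by
  constructor <;> intro hlt <;> by_contra! hle
  · exact (abs_min_max_sub_min_max_lt_of_le_upper_of_upper_lt hle hlt).ne h
  · rw [abs_sub_comm, abs_sub_comm a] at h
    exact (abs_min_max_sub_min_max_lt_of_le_upper_of_upper_lt hle hlt).ne h

lemma lt_lower_iff_of_abs_min_max_sub_min_max_eq {a b l u : α}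
    (h : |min (max a l) u - min (max b l) u| = |a - b|) : a < l ↔ b < l := by
  constructor <;> intro hlt <;> by_contra! hle
  · exact (abs_min_max_sub_min_max_lt_of_lt_lower_of_lower_le hlt hle).ne h
  · rw [abs_sub_comm, abs_sub_comm a] at h
    exact (abs_min_max_sub_min_max_lt_of_lt_lower_of_lower_le hlt hle).ne h

variable {ι : Type*} [Fintype ι]

lemma abs_min_max_sub_min_max_eq_of_sum_le {a b l u : ι → α}
    (h : ∑ i, |a i - b i| ≤ ∑ i, |min (max (a i) (l i)) (u i) - min (max (b i) (l i)) (u i)|)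
    (i : ι) : |min (max (a i) (l i)) (u i) - min (max (b i) (l i)) (u i)| = |a i - b i| :=
  have hle : ∀ j ∈ univ, |min (max (a j) (l j)) (u j) - min (max (b j) (l j)) (u j)| ≤
      |a j - b j| := fun _ _ => abs_min_max_sub_min_max_le _ _ _ _
  (sum_eq_sum_iff_of_le hle).1 ((sum_le_sum hle).antisymm h) i (mem_univ i)

theorem partition_invariant_over_equilibria_general {F : (ι → α) → ι → α}
    (hF : ∀ x y, ∑ i, |F x i - F y i| ≤ ∑ i, |x i - y i|) {l u x y : ι → α}
    (hx : ∀ i, x i = min (max (F x i) (l i)) (u i))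
    (hy : ∀ i, y i = min (max (F y i) (l i)) (u i)) (i : ι) :
    (u i < F x i ↔ u i < F y i) ∧
      ((l i ≤ F x i ∧ F x i ≤ u i) ↔ (l i ≤ F y i ∧ F y i ≤ u i)) ∧
      (F x i < l i ↔ F y i < l i) := by
  have h_total : ∑ i, |F x i - F y i| ≤
      ∑ i, |min (max (F x i) (l i)) (u i) - min (max (F y i) (l i)) (u i)| := by
    simpa only [← hx, ← hy] using hF x y
  have h_dist := abs_min_max_sub_min_max_eq_of_sum_le h_total i
  have h_surplus : u i < F x i ↔ u i < F y i := upper_lt_iff_of_abs_min_max_sub_min_max_eq h_dist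
  have h_deficit : F x i < l i ↔ F y i < l i := lt_lower_iff_of_abs_min_max_sub_min_max_eq h_dist
  exact ⟨h_surplus, and_congr (by simpa only [not_lt] using h_deficit.not)
    (by simpa only [not_lt] using h_surplus.not), h_deficit⟩

end Truncation

section MulVec

variable {m n R : Type*} [Fintype m] [Fintype n] [Ring R] [LinearOrder R] [IsOrderedRing R]

lemma sum_abs_mulVec_le {A : Matrix m n R} (hA : ∀ j, ∑ i, |A i j| ≤ 1) (v : n → R) :
    ∑ i, |(A *ᵥ v) i| ≤ ∑ j, |v j| :=
  calc ∑ i, |(A *ᵥ v) i| ≤ ∑ i, ∑ j, |A i j * v j| :=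
        sum_le_sum fun _ _ => abs_sum_le_sum_abs _ _
    _ = ∑ j, (∑ i, |A i j|) * |v j| := by
        simp only [abs_mul, sum_mul]
        exact sum_comm
    _ ≤ ∑ j, |v j| := sum_le_sum fun j _ => mul_le_of_le_one_left (abs_nonneg _) (hA j)

lemma sum_abs_add_mulVec_sub_le {A : Matrix m n R} (hA : ∀ j, ∑ i, |A i j| ≤ 1) (c : m → R)
    (x y : n → R) :
    ∑ i, |(c i + (A *ᵥ x) i) - (c i + (A *ᵥ y) i)| ≤ ∑ j, |x j - y j| := by
  simpa only [add_sub_add_left_eq_sub, mulVec_sub, Pi.sub_apply] using sum_abs_mulVec_le hA (x - y)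

end MulVec

lemma IsEquil.apply_eq {n : ℕ} {P : Matrix (Fin n) (Fin n) ℝ} {w c x : Fin n → ℝ}
    (hx : IsEquil P w c x) (i : Fin n) : x i = min (max (c i + (Pᵀ *ᵥ x) i) 0) (w i) := by
  rw [add_comm]
  exact congrFun hx i

/-- the partition of the nodes into surplus / exposed / deficit nodes is the
same for all equilibria. -/
theorem partition_invariant_over_equilibria
    {n : ℕ} (hn : 1 ≤ n) (P : Matrix (Fin n) (Fin n) ℝ)
    (hP : ∀ i j, 0 ≤ P i j) (hsub : ∀ i, ∑ j, P i j ≤ 1)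
    (w : Fin n → ℝ) (hw : 0 ≤ w) (c : Fin n → ℝ)
    (x y : Fin n → ℝ) (hx : IsEquil P w c x) (hy : IsEquil P w c y) :
    ∀ i,
      (w i < c i + Pᵀ.mulVec x i ↔ w i < c i + Pᵀ.mulVec y i) ∧
      ((0 ≤ c i + Pᵀ.mulVec x i ∧ c i + Pᵀ.mulVec x i ≤ w i) ↔
        (0 ≤ c i + Pᵀ.mulVec y i ∧ c i + Pᵀ.mulVec y i ≤ w i)) ∧
      (c i + Pᵀ.mulVec x i < 0 ↔ c i + Pᵀ.mulVec y i < 0) :=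
  have h_abs (j : Fin n) : ∑ i, |Pᵀ i j| ≤ 1 := by
    simpa only [transpose_apply, abs_of_nonneg (hP _ _)] using hsub j
  partition_invariant_over_equilibria_general (F := fun z i => c i + (Pᵀ *ᵥ z) i) (l := 0)
    (sum_abs_add_mulVec_sub_le h_abs c) hx.apply_eq hy.apply_eq
end

section
/- Let n ≥ 1, let P be an n×n nonnegative row sub-stochastic matrix that is out-connected, let w ∈ ℝ^n with w ≥ 0, and let c ∈ ℝ^n. Then the network (P, w) with exogenous flow c has a unique equilibrium: there is exactly one x ∈ ℝ^n satisfying x = S_0^w(Pᵀx + c). -/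
/-!
Replace the saturation by arbitrary nonexpansive responses `φ i : ℝ → ℝ`. The map
`F x = φ (Pᵀ x + c)` then satisfies `|F x - F y| ≤ Pᵀ |x - y|` coordinatewise, hence
`|F^[N] x - F^[N] y| ≤ (Pᵀ) ^ N |x - y|`, and summing over the coordinates shows that `F^[N]` is
Lipschitz in the `ℓ¹` distance with constant the largest row sum of `P ^ N`.

Following the powers of `P`, the row sums `P ^ k 1` never increase with `k`, and a deficit at one
node spreads to each of its predecessors in the next power. Out-connectedness makes every node
eventually lose mass, so for some `N` all row sums of `P ^ N` are below one. Banach's theorem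
applied to `F^[N]` gives a unique fixed point, which is then the unique fixed point of `F`.
-/

open Matrix Finset Filter Topology

/-- Reachability in the graph `G_P`. -/
def Reaches {n : ℕ} (P : Matrix (Fin n) (Fin n) ℝ) : Fin n → Fin n → Prop :=
  Relation.ReflTransGen (fun a b => 0 < P a b)

section PowersOfNonnegativeMatrices

variable {ι κ R : Type*} [Fintype ι] [Semiring R] [PartialOrder R]

lemma mulVec_mono_of_nonneg [IsOrderedRing R] {A : Matrix κ ι R} (hA : ∀ i j, 0 ≤ A i j) :
    Monotone (A *ᵥ ·) := fun _ _ huv i ↦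
  dotProduct_le_dotProduct_of_nonneg_left huv (hA i)

lemma mulVec_lt_mulVec_of_pos [IsStrictOrderedRing R] {A : Matrix κ ι R} {u v : ι → R} {i : κ}
    {j : ι} (hA : ∀ l, 0 ≤ A i l) (huv : u ≤ v) (hij : 0 < A i j) (hj : u j < v j) :
    (A *ᵥ u) i < (A *ᵥ v) i :=
  Finset.sum_lt_sum (fun l _ ↦ mul_le_mul_of_nonneg_left (huv l) (hA l))
    ⟨j, Finset.mem_univ j, mul_lt_mul_of_pos_left hj hij⟩

variable [DecidableEq ι] {A : Matrix ι ι R} {v : ι → R}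

lemma antitone_pow_mulVec [IsOrderedRing R] (hA : ∀ i j, 0 ≤ A i j) (hv : A *ᵥ v ≤ v) :
    Antitone fun k : ℕ ↦ A ^ k *ᵥ v := by
  refine antitone_nat_of_succ_le fun k ↦ ?_
  induction k with
  | zero => simpa using hv
  | succ k ih => simpa only [pow_succ' A, ← mulVec_mulVec] using mulVec_mono_of_nonneg hA ih

lemma exists_pow_mulVec_apply_lt [IsStrictOrderedRing R] (hA : ∀ i j, 0 ≤ A i j) (hv : A *ᵥ v ≤ v)
    {i j : ι} (hij : Relation.ReflTransGen (fun a b ↦ 0 < A a b) i j) (hj : (A *ᵥ v) j < v j) :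
    ∃ k : ℕ, (A ^ k *ᵥ v) i < v i := by
  induction hij using Relation.ReflTransGen.head_induction_on with
  | refl => exact ⟨1, by rwa [pow_one]⟩
  | @head a b hab _ ih =>
    obtain ⟨k, hk⟩ := ih
    have hle : A ^ k *ᵥ v ≤ v := by simpa using antitone_pow_mulVec hA hv k.zero_le
    refine ⟨k + 1, ?_⟩
    calc (A ^ (k + 1) *ᵥ v) a = (A *ᵥ (A ^ k *ᵥ v)) a := by rw [mulVec_mulVec, pow_succ']
      _ < (A *ᵥ v) a := mulVec_lt_mulVec_of_pos (hA a) hle hab hk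
      _ ≤ v a := hv a

lemma exists_forall_pow_mulVec_lt [IsStrictOrderedRing R] (hA : ∀ i j, 0 ≤ A i j)
    (hv : A *ᵥ v ≤ v)
    (hout : ∀ i, ∃ j, Relation.ReflTransGen (fun a b ↦ 0 < A a b) i j ∧ (A *ᵥ v) j < v j) :
    ∃ N : ℕ, ∀ i, (A ^ N *ᵥ v) i < v i := by
  have hlt (i : ι) : ∃ k : ℕ, (A ^ k *ᵥ v) i < v i :=
    let ⟨_, hij, hj⟩ := hout i
    exists_pow_mulVec_apply_lt hA hv hij hj
  choose k hk using hlt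
  exact ⟨Finset.univ.sup k, fun i ↦
    (antitone_pow_mulVec hA hv (Finset.le_sup (Finset.mem_univ i)) i).trans_lt (hk i)⟩

end PowersOfNonnegativeMatrices

lemma abs_mulVec_le {ι κ R : Type*} [Fintype ι] [Ring R] [LinearOrder R] [IsOrderedRing R]
    {A : Matrix κ ι R} (hA : ∀ i j, 0 ≤ A i j) (x : ι → R) : |A *ᵥ x| ≤ A *ᵥ |x| := fun i ↦
  calc |∑ j, A i j * x j| ≤ ∑ j, |A i j * x j| := Finset.abs_sum_le_sum_abs _ _
    _ = ∑ j, A i j * |x j| := by simp_rw [abs_mul, abs_of_nonneg (hA i _)]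

section MatrixLipschitz

variable {ι κ μ : Type*} {X : ι → Type*} {Y : κ → Type*} {Z : μ → Type*}
  [∀ i, PseudoMetricSpace (X i)] [∀ i, PseudoMetricSpace (Y i)] [∀ i, PseudoMetricSpace (Z i)]

/-- The vector-valued distance on a product of metric spaces, listing the coordinate distances. -/
def vectorDist (x y : ∀ i, X i) : ι → ℝ := fun i ↦ dist (x i) (y i)

lemma dist_eq_sum_vectorDist [Fintype ι] (x y : PiLp 1 X) :
    dist x y = ∑ i, vectorDist x.ofLp y.ofLp i :=
  (PiLp.dist_eq_sum (by simp) x y).trans (by simp [vectorDist])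

/-- A map between products of metric spaces is Lipschitz with matrix constant `A`, in the sense of
Perov, if it expands the vector-valued distance by at most the factor `A`. -/
def MatrixLipschitzWith [Fintype ι] (A : Matrix κ ι ℝ) (F : (∀ i, X i) → ∀ i, Y i) : Prop :=
  ∀ x y, vectorDist (F x) (F y) ≤ A *ᵥ vectorDist x y

namespace MatrixLipschitzWith

variable [Fintype ι] [Fintype κ]

lemma comp {A : Matrix κ ι ℝ} {B : Matrix μ κ ℝ} {F : (∀ i, X i) → ∀ i, Y i}
    {G : (∀ i, Y i) → ∀ i, Z i} (hG : MatrixLipschitzWith B G) (hB : ∀ i j, 0 ≤ B i j)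
    (hF : MatrixLipschitzWith A F) : MatrixLipschitzWith (B * A) (G ∘ F) := fun x y ↦
  calc vectorDist (G (F x)) (G (F y)) ≤ B *ᵥ vectorDist (F x) (F y) := hG _ _
    _ ≤ B *ᵥ (A *ᵥ vectorDist x y) := mulVec_mono_of_nonneg hB (hF x y)
    _ = (B * A) *ᵥ vectorDist x y := mulVec_mulVec _ _ _

lemma iterate [DecidableEq ι] {A : Matrix ι ι ℝ} {F : (∀ i, X i) → ∀ i, X i}
    (hF : MatrixLipschitzWith A F) (hA : ∀ i j, 0 ≤ A i j) (k : ℕ) :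
    MatrixLipschitzWith (A ^ k) F^[k] := by
  induction k with
  | zero => exact fun x y ↦ by simp
  | succ k ih =>
    rw [pow_succ', Function.iterate_succ']
    exact hF.comp hA ih

lemma sum_vectorDist_le {A : Matrix κ ι ℝ} {F : (∀ i, X i) → ∀ i, Y i}
    (hF : MatrixLipschitzWith A F) {K : ℝ} (hK : ∀ j, (1 ᵥ* A) j ≤ K) (x y : ∀ i, X i) :
    ∑ i, vectorDist (F x) (F y) i ≤ K * ∑ j, vectorDist x y j :=
  calc ∑ i, vectorDist (F x) (F y) i ≤ ∑ i, (A *ᵥ vectorDist x y) i :=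
        Finset.sum_le_sum fun i _ ↦ hF x y i
    _ = (1 ᵥ* A) ⬝ᵥ vectorDist x y := by rw [← one_dotProduct, dotProduct_mulVec]
    _ ≤ ∑ j, K * vectorDist x y j :=
        Finset.sum_le_sum fun j _ ↦ mul_le_mul_of_nonneg_right (hK j) dist_nonneg
    _ = K * ∑ j, vectorDist x y j := (Finset.mul_sum ..).symm

lemma lipschitzWith_toLp_one {A : Matrix κ ι ℝ} {F : (∀ i, X i) → ∀ i, Y i}
    (hF : MatrixLipschitzWith A F) {K : NNReal} (hK : ∀ j, (1 ᵥ* A) j ≤ K) :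
    LipschitzWith K fun x : PiLp 1 X ↦ (WithLp.toLp 1 (F x.ofLp) : PiLp 1 Y) :=
  LipschitzWith.of_dist_le_mul fun x y ↦ by
    simpa only [dist_eq_sum_vectorDist] using hF.sum_vectorDist_le hK x.ofLp y.ofLp

theorem existsUnique_isFixedPt [DecidableEq ι] {X : ι → Type*} [∀ i, MetricSpace (X i)]
    [∀ i, CompleteSpace (X i)] [∀ i, Nonempty (X i)] {A : Matrix ι ι ℝ}
    {F : (∀ i, X i) → ∀ i, X i} (hF : MatrixLipschitzWith A F) (hA : ∀ i j, 0 ≤ A i j)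
    {N : ℕ} (hN : ∀ j, (1 ᵥ* A ^ N) j < 1) : ∃! x, Function.IsFixedPt F x := by
  have : Nonempty (PiLp 1 X) := ⟨WithLp.toLp 1 (Classical.arbitrary _)⟩
  let G : PiLp 1 X → PiLp 1 X := fun x ↦ WithLp.toLp 1 (F x.ofLp)
  have hFG : Function.Semiconj (WithLp.toLp 1) F G := fun _ ↦ rfl
  have hGN : G^[N] = fun x ↦ WithLp.toLp 1 (F^[N] x.ofLp) :=
    funext fun x ↦ (hFG.iterate_right N x.ofLp).symm
  let K : NNReal := Finset.univ.sup fun j ↦ ((1 ᵥ* A ^ N) j).toNNReal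
  have hK : K < 1 :=
    (Finset.sup_lt_iff zero_lt_one).2 fun j _ ↦ Real.toNNReal_lt_one.2 (hN j)
  have hcontr : ContractingWith K G^[N] := by
    refine ⟨hK, hGN ▸ (hF.iterate hA N).lipschitzWith_toLp_one fun j ↦ ?_⟩
    exact Real.toNNReal_le_iff_le_coe.1
      (Finset.le_sup (f := fun j ↦ ((1 ᵥ* A ^ N) j).toNNReal) (Finset.mem_univ j))
  refine ⟨_, congrArg WithLp.ofLp hcontr.isFixedPt_fixedPoint_iterate, fun y hy ↦ ?_⟩
  have hGy : Function.IsFixedPt G (WithLp.toLp 1 y) := congrArg (WithLp.toLp 1) hy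
  exact congrArg WithLp.ofLp (hcontr.fixedPoint_unique (hGy.iterate N))

end MatrixLipschitzWith

end MatrixLipschitz

lemma matrixLipschitzWith_of_lipschitzWith_one {ι κ : Type*} [Fintype ι] {A : Matrix κ ι ℝ}
    (hA : ∀ i j, 0 ≤ A i j) {φ : κ → ℝ → ℝ} (hφ : ∀ i, LipschitzWith 1 (φ i)) (c : κ → ℝ) :
    MatrixLipschitzWith A fun x i ↦ φ i ((A *ᵥ x + c) i) := fun x y i ↦
  calc dist (φ i ((A *ᵥ x + c) i)) (φ i ((A *ᵥ y + c) i))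
      ≤ dist ((A *ᵥ x + c) i) ((A *ᵥ y + c) i) := by
        simpa using (hφ i).dist_le_mul ((A *ᵥ x + c) i) ((A *ᵥ y + c) i)
    _ = |A *ᵥ (x - y)| i := by simp [Real.dist_eq, mulVec_sub]
    _ ≤ (A *ᵥ |x - y|) i := abs_mulVec_le hA (x - y) i

theorem outconnected_unique_equilibrium_general {ι : Type*} [Fintype ι] {P : Matrix ι ι ℝ}
    (hP : ∀ i j, 0 ≤ P i j) (hsub : ∀ i, ∑ j, P i j ≤ 1)
    (hout : ∀ i, ∃ j, Relation.ReflTransGen (fun a b ↦ 0 < P a b) i j ∧ ∑ k, P j k < 1)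
    {φ : ι → ℝ → ℝ} (hφ : ∀ i, LipschitzWith 1 (φ i)) (c : ι → ℝ) :
    ∃! x : ι → ℝ, x = fun i ↦ φ i ((Pᵀ *ᵥ x + c) i) := by
  classical
  have hrow (i : ι) : (P *ᵥ 1) i = ∑ j, P i j := dotProduct_one _
  obtain ⟨N, hN⟩ : ∃ N : ℕ, ∀ i, (P ^ N *ᵥ 1) i < (1 : ι → ℝ) i :=
    exists_forall_pow_mulVec_lt hP (fun i ↦ (hrow i).trans_le (hsub i))
      (by simpa only [hrow, Pi.one_apply] using hout)
  have hcol (j : ι) : (1 ᵥ* Pᵀ ^ N) j < 1 := by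
    rw [← transpose_pow, vecMul_transpose]
    exact hN j
  have hPT (i j : ι) : 0 ≤ Pᵀ i j := hP j i
  simpa only [Function.IsFixedPt, eq_comm] using
    (matrixLipschitzWith_of_lipschitzWith_one hPT hφ c).existsUnique_isFixedPt hPT hcol

/-- for an out-connected nonnegative row sub-stochastic matrix `P`, `w ≥ 0`
and any exogenous flow `c`, the equilibrium is unique. -/
theorem outconnected_unique_equilibrium
    {n : ℕ} (hn : 1 ≤ n) (P : Matrix (Fin n) (Fin n) ℝ)
    (hP : ∀ i j, 0 ≤ P i j) (hsub : ∀ i, ∑ j, P i j ≤ 1)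
    (hO : ∃ i, ∑ j, P i j < 1)
    (hout : ∀ i, ∃ j, Reaches P i j ∧ ∑ k, P j k < 1)
    (w : Fin n → ℝ) (hw : 0 ≤ w) (c : Fin n → ℝ) :
    ∃! x : Fin n → ℝ, IsEquil P w c x :=
  outconnected_unique_equilibrium_general hP hsub hout
    (fun i ↦ (LipschitzWith.id.max_const 0).min_const (w i)) c
end

section
/- Let n ≥ 1 and let P be an n×n irreducible row-stochastic matrix. Let c ∈ ℝ^n be a zero-sum vector, i.e., Σ_i c_i = 0. Then the series ν = (1/2) Σ_{k≥0} ((I + Pᵀ)/2)^k c converges in ℝ^n, and its sum ν satisfies ν = Pᵀν + c. -/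
open Matrix Finset Filter Topology

/-!
If some state can be reached from every other, then a power of the lazy matrix has a positive
column, because waiting makes all long enough path lengths available. All rows of that power share
some mass in this column, so it contracts the `ℓ¹` norm on zero-sum vectors by a factor less than
`1`, and the series is dominated by a geometric one. Shifting the series by one term gives the
fixed point equation.
-/

theorem summable_of_add_le_mul {f : ℕ → ℝ} {m : ℕ} {r : ℝ} (hf : ∀ k, 0 ≤ f k) (hr : r < 1)
    (h : ∀ k, f (m + k) ≤ r * f k) : Summable f := by
  refine summable_of_sum_range_le (c := (∑ k ∈ range m, f k) / (1 - r)) hf fun N => ?_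
  have hmono : ∑ k ∈ range N, f k ≤ ∑ k ∈ range (m + N), f k :=
    sum_le_sum_of_subset_of_nonneg (range_mono (Nat.le_add_left N m)) fun k _ _ => hf k
  have hshift : ∑ k ∈ range N, f (m + k) ≤ r * ∑ k ∈ range N, f k := by
    rw [mul_sum]
    exact sum_le_sum fun k _ => h k
  rw [sum_range_add] at hmono
  rw [le_div_iff₀ (sub_pos.2 hr)]
  linarith

section VecMul

variable {ι κ R : Type*} [Fintype ι]

theorem eq_vecMul_add_of_hasSum_vecMul_pow [DecidableEq ι] [Semiring R] [TopologicalSpace R]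
    [IsTopologicalSemiring R] [T2Space R] {M : Matrix ι ι R} {x s : ι → R}
    (hs : HasSum (fun k : ℕ => x ᵥ* M ^ k) s) : s = s ᵥ* M + x := by
  have hmap : HasSum (fun k : ℕ => x ᵥ* M ^ (k + 1)) (s ᵥ* M) := by
    simpa [Function.comp_def, pow_succ] using
      hs.map M.vecMulLinear (continuous_id.matrix_vecMul continuous_const)
  have hshift := HasSum.zero_add (f := fun k => x ᵥ* M ^ k) hmap
  rw [pow_zero, vecMul_one, add_comm] at hshift
  exact hs.unique hshift

theorem sum_vecMul_of_mem_rowStochastic [DecidableEq ι] [CommSemiring R] [PartialOrder R]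
    [IsOrderedRing R] {M : Matrix ι ι R} (hM : M ∈ rowStochastic R ι) (x : ι → R) :
    ∑ j, (x ᵥ* M) j = ∑ i, x i := by
  rw [← mulVec_transpose]
  exact sum_mulVec_of_mem_colStochastic (transpose_mem_colStochastic_iff_mem_rowStochastic.2 hM)

theorem sum_abs_vecMul_le_of_le_apply [Fintype κ] [CommRing R] [LinearOrder R]
    [IsStrictOrderedRing R] {M : Matrix ι κ R} {δ : κ → R} (hδ : ∀ i j, δ j ≤ M i j)
    (hM : ∀ i, ∑ j, M i j = 1) {x : ι → R} (hx : ∑ i, x i = 0) :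
    ∑ j, |(x ᵥ* M) j| ≤ (1 - ∑ j, δ j) * ∑ i, |x i| := by
  -- As `x` has zero sum, subtracting `δ j` from the whole column `j` does not change `x ᵥ* M`.
  have hsub (j : κ) : (x ᵥ* M) j = ∑ i, x i * (M i j - δ j) := by
    simp only [mul_sub, sum_sub_distrib, ← sum_mul, hx, zero_mul, sub_zero]
    rfl
  have hcol (j : κ) : |(x ᵥ* M) j| ≤ ∑ i, |x i| * (M i j - δ j) := by
    rw [hsub]
    refine (abs_sum_le_sum_abs _ _).trans_eq (sum_congr rfl fun i _ => ?_)
    rw [abs_mul, abs_of_nonneg (sub_nonneg.2 (hδ i j))]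
  calc ∑ j, |(x ᵥ* M) j| ≤ ∑ j, ∑ i, |x i| * (M i j - δ j) := sum_le_sum fun j _ => hcol j
    _ = ∑ i, |x i| * ∑ j, (M i j - δ j) := by
      rw [sum_comm]
      simp only [mul_sum]
    _ = (1 - ∑ j, δ j) * ∑ i, |x i| := by
      simp only [sum_sub_distrib, hM, ← sum_mul, mul_comm]

theorem sum_abs_vecMul_le_of_mem_rowStochastic [DecidableEq ι] [CommRing R] [LinearOrder R]
    [IsStrictOrderedRing R] {M : Matrix ι ι R} (hM : M ∈ rowStochastic R ι) {j : ι} {ε : R}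
    (hε : ∀ i, ε ≤ M i j) {x : ι → R} (hx : ∑ i, x i = 0) :
    ∑ i, |(x ᵥ* M) i| ≤ (1 - ε) * ∑ i, |x i| := by
  have hle (i l : ι) : (Pi.single j ε : ι → R) l ≤ M i l := by
    obtain rfl | hl := eq_or_ne l j
    · simpa using hε i
    · simpa [hl] using nonneg_of_mem_rowStochastic hM
  simpa using sum_abs_vecMul_le_of_le_apply hle (sum_row_of_mem_rowStochastic hM) hx

theorem eventually_pow_apply_pos [DecidableEq ι] [Ring R] [LinearOrder R]
    [IsStrictOrderedRing R] {A : Matrix ι ι R} (hA : ∀ i j, 0 ≤ A i j) {i j : ι} (hi : 0 < A i i)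
    (hij : Relation.ReflTransGen (fun a b => 0 < A a b) i j) :
    ∀ᶠ k in atTop, 0 < (A ^ k) i j := by
  let : Quiver ι := toQuiver A
  simp only [pow_apply_pos_iff_nonempty_path hA]
  induction hij with
  | refl =>
    refine Eventually.of_forall fun k => ?_
    induction k with
    | zero => exact ⟨.nil, rfl⟩
    | succ k ih =>
      obtain ⟨p, hp⟩ := ih
      exact ⟨p.cons ⟨hi⟩, congrArg (· + 1) hp⟩
  | tail _ hbc ih =>
    rw [← map_add_atTop_eq_nat 1, eventually_map]
    exact ih.mono fun k ⟨p, hp⟩ => ⟨p.cons ⟨hbc⟩, congrArg (· + 1) hp⟩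

theorem summable_vecMul_pow_of_pow_apply_pos [DecidableEq ι] {M : Matrix ι ι ℝ}
    (hM : M ∈ rowStochastic ℝ ι) {m : ℕ} {j : ι} (hpos : ∀ i, 0 < (M ^ m) i j) {x : ι → ℝ}
    (hx : ∑ i, x i = 0) : Summable fun k : ℕ => x ᵥ* M ^ k := by
  have : Nonempty ι := ⟨j⟩
  obtain ⟨i₀, hmin⟩ := Finite.exists_min fun i => (M ^ m) i j
  have hcontract (k : ℕ) : ∑ i, |(x ᵥ* M ^ (m + k)) i| ≤
      (1 - (M ^ m) i₀ j) * ∑ i, |(x ᵥ* M ^ k) i| := by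
    have hzero : ∑ i, (x ᵥ* M ^ k) i = 0 := by
      rw [sum_vecMul_of_mem_rowStochastic (pow_mem hM k), hx]
    rw [add_comm, pow_add, ← vecMul_vecMul]
    exact sum_abs_vecMul_le_of_mem_rowStochastic (pow_mem hM m) hmin hzero
  have hsum : Summable fun k : ℕ => ∑ i, |(x ᵥ* M ^ k) i| :=
    summable_of_add_le_mul (fun k => sum_nonneg fun i _ => abs_nonneg _)
      (sub_lt_self 1 (hpos i₀)) hcontract
  refine Pi.summable.2 fun i => Summable.of_norm_bounded hsum fun k => ?_
  exact single_le_sum (f := fun i => |(x ᵥ* M ^ k) i|) (fun i _ => abs_nonneg _) (mem_univ i)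

end VecMul

section LazyMatrix

variable {ι R : Type*} [DecidableEq ι]

/-- The lazy version of the transition matrix `P`: the chain that moves according to `P` with
probability `θ` and stays where it is with probability `1 - θ`. -/
def lazyMatrix [Ring R] (θ : R) (P : Matrix ι ι R) : Matrix ι ι R :=
  (1 - θ) • 1 + θ • P

section Order

variable [Ring R] [LinearOrder R] [IsStrictOrderedRing R] {P : Matrix ι ι R} {θ : R}

theorem lazyMatrix_mem_rowStochastic [Fintype ι] (hP : P ∈ rowStochastic R ι) (hθ₀ : 0 ≤ θ)
    (hθ₁ : θ ≤ 1) : lazyMatrix θ P ∈ rowStochastic R ι :=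
  convex_rowStochastic (one_mem _) hP (sub_nonneg.2 hθ₁) hθ₀ (sub_add_cancel 1 θ)

theorem lazyMatrix_apply_self_pos {i : ι} (hP : 0 ≤ P i i) (hθ₀ : 0 ≤ θ) (hθ₁ : θ < 1) :
    0 < lazyMatrix θ P i i := by
  simpa [lazyMatrix] using add_pos_of_pos_of_nonneg (sub_pos.2 hθ₁) (mul_nonneg hθ₀ hP)

theorem lazyMatrix_apply_nonneg {i j : ι} (hP : 0 ≤ P i j) (hθ₀ : 0 ≤ θ) (hθ₁ : θ ≤ 1) :
    0 ≤ lazyMatrix θ P i j :=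
  add_nonneg (mul_nonneg (sub_nonneg.2 hθ₁) (zero_le_one_elem i j)) (mul_nonneg hθ₀ hP)

theorem lazyMatrix_apply_pos {i j : ι} (hP : 0 < P i j) (hθ₀ : 0 < θ) (hθ₁ : θ ≤ 1) :
    0 < lazyMatrix θ P i j :=
  add_pos_of_nonneg_of_pos (mul_nonneg (sub_nonneg.2 hθ₁) (zero_le_one_elem i j)) (mul_pos hθ₀ hP)

theorem exists_lazyMatrix_pow_apply_pos [Fintype ι] (hP : ∀ i j, 0 ≤ P i j) {j : ι}
    (hj : ∀ i, Relation.ReflTransGen (fun a b => 0 < P a b) i j) (hθ₀ : 0 < θ) (hθ₁ : θ < 1) :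
    ∃ m, ∀ i, 0 < (lazyMatrix θ P ^ m) i j := by
  have hreach (i : ι) : Relation.ReflTransGen (fun a b => 0 < lazyMatrix θ P a b) i j :=
    Relation.ReflTransGen.mono (fun _ _ hab => lazyMatrix_apply_pos hab hθ₀ hθ₁.le) i j (hj i)
  exact (eventually_all.2 fun i => eventually_pow_apply_pos
    (fun a b => lazyMatrix_apply_nonneg (hP a b) hθ₀.le hθ₁.le)
    (lazyMatrix_apply_self_pos (hP i i) hθ₀.le hθ₁) (hreach i)).exists

end Order

theorem smul_eq_vecMul_add_of_eq_vecMul_lazyMatrix_add [Fintype ι] [CommRing R] {P : Matrix ι ι R}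
    {θ : R} {s c : ι → R} (hs : s = s ᵥ* lazyMatrix θ P + c) : θ • s = (θ • s) ᵥ* P + c := by
  rw [lazyMatrix, vecMul_add, vecMul_smul, vecMul_smul, vecMul_one, sub_smul, one_smul] at hs
  rw [smul_vecMul]
  linear_combination hs

theorem series_nu_converges_general [Fintype ι] {P : Matrix ι ι ℝ} (hP : P ∈ rowStochastic ℝ ι)
    {j : ι} (hj : ∀ i, Relation.ReflTransGen (fun a b => 0 < P a b) i j)
    {θ : ℝ} (hθ₀ : 0 < θ) (hθ₁ : θ < 1) {c : ι → ℝ} (hc : ∑ i, c i = 0) :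
    ∃ ν : ι → ℝ, HasSum (fun k : ℕ => θ • (c ᵥ* lazyMatrix θ P ^ k)) ν ∧ ν = ν ᵥ* P + c := by
  obtain ⟨m, hm⟩ := exists_lazyMatrix_pow_apply_pos hP.1 hj hθ₀ hθ₁
  obtain ⟨s, hs⟩ := summable_vecMul_pow_of_pow_apply_pos
    (lazyMatrix_mem_rowStochastic hP hθ₀.le hθ₁.le) hm hc
  exact ⟨θ • s, hs.const_smul θ, smul_eq_vecMul_add_of_eq_vecMul_lazyMatrix_add
    (eq_vecMul_add_of_hasSum_vecMul_pow hs)⟩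

theorem transpose_lazyMatrix_inv_two [DivisionRing R] [NeZero (2 : R)] (P : Matrix ι ι R) :
    (lazyMatrix 2⁻¹ P)ᵀ = (2 : R)⁻¹ • (1 + Pᵀ) := by
  have hhalf : (1 - 2⁻¹ : R) = 2⁻¹ := by
    rw [sub_eq_iff_eq_add, ← two_mul, mul_inv_cancel₀ two_ne_zero]
  simp [lazyMatrix, hhalf]

end LazyMatrix

/-- for an irreducible row-stochastic matrix `P` and a zero-sum vector `c`,
the series `ν = (1/2) ∑_{k ≥ 0} ((I + Pᵀ)/2)^k c` converges and its sum satisfies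
`ν = Pᵀ ν + c`. -/
theorem series_nu_converges
    {n : ℕ} (hn : 1 ≤ n) (P : Matrix (Fin n) (Fin n) ℝ)
    (hP : ∀ i j, 0 ≤ P i j) (hst : ∀ i, ∑ j, P i j = 1)
    (hirr : ∀ i j, Reaches P i j)
    (c : Fin n → ℝ) (hc : ∑ i, c i = 0) :
    ∃ ν : Fin n → ℝ,
      HasSum (fun k : ℕ => (2 : ℝ)⁻¹ • (((2 : ℝ)⁻¹ • (1 + Pᵀ)) ^ k).mulVec c) ν ∧
      ν = Pᵀ.mulVec ν + c := by
  simp only [← transpose_lazyMatrix_inv_two, ← transpose_pow, mulVec_transpose]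
  exact series_nu_converges_general (mem_rowStochastic_iff_sum.2 ⟨hP, hst⟩)
    (fun i => hirr i ⟨0, hn⟩) (by norm_num) (by norm_num) hc
end

section
/- Let n ≥ 1, let P be an n×n irreducible row-stochastic matrix, let w ∈ ℝ^n with w ≥ 0, and let c ∈ ℝ^n. Let π ∈ ℝ^n be the invariant probability vector of P (π = Pᵀπ, Σ_i π_i = 1, π_i > 0 for all i), and suppose ν ∈ ℝ^n satisfies ν = Pᵀν + c. If the network (P, w) with exogenous flow c has more than one equilibrium, then Σ_i c_i = 0 and min_i (ν_i / π_i) + min_i ((w_i − ν_i) / π_i) > 0. -/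
open Matrix Finset Filter Topology

/-!
For a nonnegative irreducible `P` with a positive invariant vector `π`, a maximum principle along
the edges of `G_P` forces every vector `v ≤ Pᵀ v` to be a multiple of `π`. Saturation does not
increase positive parts of differences, so `(x - y)⁺` is such a vector for any two equilibria; if
it is nonzero, then `x - y = k π` with `k > 0`, and the flows `Pᵀ x + c` and `Pᵀ y + c` differ by
the same `k π`. Saturation thus preserves a positive difference at every node, which it does only
where neither flow is cut off. Hence `y` solves the linear equation, so `y = ν + t π` and
`x = ν + (k + t) π` for some `t`, and the bounds `0 ≤ y` and `x ≤ w` read `-t ≤ νᵢ / πᵢ` and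
`k + t ≤ (wᵢ - νᵢ) / πᵢ`.
-/

lemma le_ciInf_div_of_smul_le {ι : Type*} [Nonempty ι] {π v : ι → ℝ} (hπ_pos : ∀ i, 0 < π i)
    {s : ℝ} (hs : s • π ≤ v) : s ≤ ⨅ i, v i / π i :=
  le_ciInf fun i => (le_div_iff₀ (hπ_pos i)).2 (hs i)

section NonnegativeMatrix

variable {ι R K : Type*} [Fintype ι]

lemma mulVec_le_mulVec_of_nonneg {κ : Type*} [Semiring R] [PartialOrder R] [IsOrderedRing R]
    {A : Matrix κ ι R} (hA : ∀ i j, 0 ≤ A i j) {u v : ι → R} (huv : u ≤ v) : A *ᵥ u ≤ A *ᵥ v :=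
  fun i => dotProduct_le_dotProduct_of_nonneg_left huv (hA i)

lemma apply_eq_zero_of_transpose_mulVec_le [Semiring R] [PartialOrder R] [IsStrictOrderedRing R]
    {P : Matrix ι ι R} (hP : ∀ i j, 0 ≤ P i j) {e : ι → R} (he : 0 ≤ e) (hPe : Pᵀ *ᵥ e ≤ e)
    {m : ι} (hm : e m = 0) {i : ι} (him : Relation.ReflTransGen (fun a b => 0 < P a b) i m) :
    e i = 0 := by
  induction him using Relation.ReflTransGen.head_induction_on with
  | refl => exact hm
  | @head a b hab _ hb =>
    have hsum : ∑ j, P j b * e j ≤ 0 := hb ▸ hPe b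
    have hterm : P a b * e a ≤ 0 :=
      (single_le_sum (fun j _ => mul_nonneg (hP j b) (he j)) (mem_univ a)).trans hsum
    by_contra hne
    exact (mul_pos hab ((he a).lt_of_ne' hne)).not_ge hterm

lemma exists_eq_smul_of_le_transpose_mulVec [Field K] [LinearOrder K] [IsStrictOrderedRing K]
    {P : Matrix ι ι K} (hP : ∀ i j, 0 ≤ P i j)
    (hirr : ∀ i j, Relation.ReflTransGen (fun a b => 0 < P a b) i j) {π : ι → K}
    (hπ : Pᵀ *ᵥ π = π) (hπ_pos : ∀ i, 0 < π i) {v : ι → K} (hv : v ≤ Pᵀ *ᵥ v) :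
    ∃ k : K, v = k • π := by
  cases isEmpty_or_nonempty ι
  · exact ⟨0, Subsingleton.elim _ _⟩
  obtain ⟨m, hmax⟩ := Finite.exists_max fun i => v i / π i
  have hgap_nonneg : 0 ≤ (v m / π m) • π - v :=
    fun i => sub_nonneg.2 ((div_le_iff₀ (hπ_pos i)).1 (hmax i))
  have hgap_super : Pᵀ *ᵥ ((v m / π m) • π - v) ≤ (v m / π m) • π - v := by
    rw [mulVec_sub, mulVec_smul, hπ]
    exact sub_le_sub_left hv _
  have hgap_max : ((v m / π m) • π - v) m = 0 := by
    simp [(hπ_pos m).ne']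
  refine ⟨v m / π m, (sub_eq_zero.1 (funext fun i => ?_)).symm⟩
  exact apply_eq_zero_of_transpose_mulVec_le hP hgap_nonneg hgap_super hgap_max (hirr i m)

lemma dotProduct_eq_zero_of_eq_transpose_mulVec_add [CommRing R] {P : Matrix ι ι R}
    {r ν c : ι → R} (hr : P *ᵥ r = r) (hν : ν = Pᵀ *ᵥ ν + c) : r ⬝ᵥ c = 0 := by
  have hdual : r ⬝ᵥ Pᵀ *ᵥ ν = r ⬝ᵥ ν := by
    rw [dotProduct_mulVec, vecMul_transpose, hr]
  rw [eq_sub_of_add_eq' hν.symm, dotProduct_sub, hdual, sub_self]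

end NonnegativeMatrix

section Saturation

variable {n : ℕ} {w y z : Fin n → ℝ}

lemma sat_sub_sat_le_posPart : sat w y - sat w z ≤ (y - z)⁺ := by
  intro i
  simp only [Pi.sub_apply, Pi.posPart_apply, posPart_def, sat]
  grind

lemma nonneg_and_sat_eq_self_of_sat_sub_sat_eq {i : Fin n} (hyz : y i < z i)
    (h : sat w z i - sat w y i = z i - y i) : 0 ≤ y i ∧ sat w y i = y i := by
  simp only [sat] at h ⊢
  grind

end Saturation

namespace IsEquil

variable {n : ℕ} {P : Matrix (Fin n) (Fin n) ℝ} {w c x y π ν : Fin n → ℝ}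

lemma posPart_sub_le (hP : ∀ i j, 0 ≤ P i j) (hx : IsEquil P w c x) (hy : IsEquil P w c y) :
    (x - y)⁺ ≤ Pᵀ *ᵥ (x - y)⁺ := by
  have hPt : ∀ i j, 0 ≤ Pᵀ i j := fun i j => hP j i
  have hnonneg : 0 ≤ Pᵀ *ᵥ (x - y)⁺ := by
    rw [← mulVec_zero Pᵀ]
    exact mulVec_le_mulVec_of_nonneg hPt (posPart_nonneg (x - y))
  have hflow : (Pᵀ *ᵥ x + c) - (Pᵀ *ᵥ y + c) ≤ Pᵀ *ᵥ (x - y)⁺ := by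
    rw [add_sub_add_right_eq_sub, ← mulVec_sub]
    exact mulVec_le_mulVec_of_nonneg hPt (le_posPart (x - y))
  refine sup_le ?_ hnonneg
  calc x - y = sat w (Pᵀ *ᵥ x + c) - sat w (Pᵀ *ᵥ y + c) := congrArg₂ (· - ·) hx hy
    _ ≤ ((Pᵀ *ᵥ x + c) - (Pᵀ *ᵥ y + c))⁺ := sat_sub_sat_le_posPart
    _ ≤ Pᵀ *ᵥ (x - y)⁺ := sup_le hflow hnonneg

lemma exists_sub_eq_smul_of_not_le (hP : ∀ i j, 0 ≤ P i j) (hirr : ∀ i j, Reaches P i j)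
    (hπ : Pᵀ *ᵥ π = π) (hπ_pos : ∀ i, 0 < π i) (hx : IsEquil P w c x) (hy : IsEquil P w c y)
    (hxy : ¬x ≤ y) : ∃ k : ℝ, 0 < k ∧ x - y = k • π := by
  obtain ⟨k, hk⟩ :=
    exists_eq_smul_of_le_transpose_mulVec hP hirr hπ hπ_pos (hx.posPart_sub_le hP hy)
  have hki : ∀ i, (x i - y i)⁺ = k * π i := congrFun hk
  obtain ⟨j, hj⟩ : ∃ j, y j < x j := by
    simpa only [Pi.le_def, not_forall, not_le] using hxy
  have hk_pos : 0 < k := by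
    refine pos_of_mul_pos_left ?_ (hπ_pos j).le
    rw [← hki j]
    exact posPart_pos_iff.2 (sub_pos.2 hj)
  refine ⟨k, hk_pos, funext fun i => ?_⟩
  have hi : 0 < (x i - y i)⁺ := by
    rw [hki i]
    exact mul_pos hk_pos (hπ_pos i)
  exact (posPart_eq_of_posPart_pos hi).symm.trans (hki i)

lemma le_capacity (hx : IsEquil P w c x) : x ≤ w :=
  fun i => (congrFun hx i).trans_le (min_le_right _ _)

lemma nonneg_and_eq_of_sub_invariant (hx : IsEquil P w c x) (hy : IsEquil P w c y)
    (hlt : ∀ i, y i < x i) (hinv : Pᵀ *ᵥ (x - y) = x - y) : 0 ≤ y ∧ y = Pᵀ *ᵥ y + c := by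
  have hflow : (Pᵀ *ᵥ x + c) - (Pᵀ *ᵥ y + c) = x - y := by
    rw [add_sub_add_right_eq_sub, ← mulVec_sub, hinv]
  have hsat : sat w (Pᵀ *ᵥ x + c) - sat w (Pᵀ *ᵥ y + c) = x - y :=
    congrArg₂ (· - ·) hx.symm hy.symm
  have hunsat : ∀ i, 0 ≤ (Pᵀ *ᵥ y + c) i ∧ sat w (Pᵀ *ᵥ y + c) i = (Pᵀ *ᵥ y + c) i := fun i =>
    nonneg_and_sat_eq_self_of_sat_sub_sat_eq
      (sub_pos.1 ((sub_pos.2 (hlt i)).trans_eq (congrFun hflow i).symm))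
      (congrFun (hsat.trans hflow.symm) i)
  have hfix : y = Pᵀ *ᵥ y + c := hy.trans (funext fun i => (hunsat i).2)
  exact ⟨fun i => (hunsat i).1.trans_eq (congrFun hfix i).symm, hfix⟩

lemma ciInf_add_ciInf_pos_of_not_le (hP : ∀ i j, 0 ≤ P i j) (hirr : ∀ i j, Reaches P i j)
    (hπ : Pᵀ *ᵥ π = π) (hπ_pos : ∀ i, 0 < π i) (hν : ν = Pᵀ *ᵥ ν + c)
    (hx : IsEquil P w c x) (hy : IsEquil P w c y) (hxy : ¬x ≤ y) :
    0 < (⨅ i, ν i / π i) + ⨅ i, (w i - ν i) / π i := by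
  have : Nonempty (Fin n) := not_isEmpty_iff.1 fun _ => hxy isEmptyElim
  obtain ⟨k, hk, hsub⟩ := hx.exists_sub_eq_smul_of_not_le hP hirr hπ hπ_pos hy hxy
  have hlt : ∀ i, y i < x i := fun i =>
    sub_pos.1 ((mul_pos hk (hπ_pos i)).trans_eq (congrFun hsub i).symm)
  have hinv : Pᵀ *ᵥ (x - y) = x - y := by
    rw [hsub, mulVec_smul, hπ]
  obtain ⟨hy_nonneg, hy_fix⟩ := hx.nonneg_and_eq_of_sub_invariant hy hlt hinv
  have hyν : y - ν = Pᵀ *ᵥ (y - ν) := by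
    calc y - ν = (Pᵀ *ᵥ y + c) - (Pᵀ *ᵥ ν + c) := congrArg₂ (· - ·) hy_fix hν
      _ = Pᵀ *ᵥ (y - ν) := by rw [add_sub_add_right_eq_sub, mulVec_sub]
  obtain ⟨t, ht⟩ := exists_eq_smul_of_le_transpose_mulVec hP hirr hπ hπ_pos hyν.le
  have hlow : -t ≤ ⨅ i, ν i / π i := by
    refine le_ciInf_div_of_smul_le hπ_pos ?_
    calc -t • π = ν - y := by rw [neg_smul, ← ht, neg_sub]
      _ ≤ ν := sub_le_self _ hy_nonneg
  have hhigh : k + t ≤ ⨅ i, (w i - ν i) / π i := by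
    refine le_ciInf_div_of_smul_le (v := w - ν) hπ_pos ?_
    calc (k + t) • π = x - ν := by rw [add_smul, ← hsub, ← ht, sub_add_sub_cancel]
      _ ≤ w - ν := sub_le_sub_right hx.le_capacity _
  linarith

end IsEquil

theorem irreducible_nonuniqueness_necessary_general {n : ℕ} {P : Matrix (Fin n) (Fin n) ℝ}
    (hP : ∀ i j, 0 ≤ P i j) (hirr : ∀ i j, Reaches P i j) {w c π ν : Fin n → ℝ}
    (hπ : Pᵀ *ᵥ π = π) (hπ_pos : ∀ i, 0 < π i) (hν : ν = Pᵀ *ᵥ ν + c)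
    (hmulti : ∃ x y : Fin n → ℝ, IsEquil P w c x ∧ IsEquil P w c y ∧ x ≠ y) :
    (∀ r, P *ᵥ r = r → r ⬝ᵥ c = 0) ∧ 0 < (⨅ i, ν i / π i) + ⨅ i, (w i - ν i) / π i := by
  refine ⟨fun r hr => dotProduct_eq_zero_of_eq_transpose_mulVec_add hr hν, ?_⟩
  obtain ⟨x, y, hx, hy, hne⟩ := hmulti
  by_cases hxy : x ≤ y
  · have hyx : ¬y ≤ x := fun hyx => hne (hxy.antisymm hyx)
    exact hy.ciInf_add_ciInf_pos_of_not_le hP hirr hπ hπ_pos hν hx hyx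
  · exact hx.ciInf_add_ciInf_pos_of_not_le hP hirr hπ hπ_pos hν hy hxy

/-- necessary conditions for non-uniqueness in the irreducible stochastic
case: if there are multiple equilibria then `∑ᵢ cᵢ = 0` and
`minᵢ (νᵢ/πᵢ) + minᵢ ((wᵢ − νᵢ)/πᵢ) > 0`. -/
theorem irreducible_nonuniqueness_necessary
    {n : ℕ} (hn : 1 ≤ n) (P : Matrix (Fin n) (Fin n) ℝ)
    (hP : ∀ i j, 0 ≤ P i j) (hst : ∀ i, ∑ j, P i j = 1)
    (hirr : ∀ i j, Reaches P i j)
    (w : Fin n → ℝ) (hw : 0 ≤ w) (c : Fin n → ℝ)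
    (π : Fin n → ℝ) (hπ1 : Pᵀ.mulVec π = π) (hπ2 : ∑ i, π i = 1) (hπ3 : ∀ i, 0 < π i)
    (ν : Fin n → ℝ) (hν : ν = Pᵀ.mulVec ν + c)
    (hmulti : ∃ x y : Fin n → ℝ, IsEquil P w c x ∧ IsEquil P w c y ∧ x ≠ y) :
    ∑ i, c i = 0 ∧ 0 < (⨅ i, ν i / π i) + ⨅ i, (w i - ν i) / π i := by
  have hgen := irreducible_nonuniqueness_necessary_general hP hirr hπ1 hπ3 hν hmulti
  have hone : P *ᵥ 1 = 1 := funext fun i => (dotProduct_one (P i)).trans (hst i)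
  exact ⟨(one_dotProduct c).symm.trans (hgen.1 1 hone), hgen.2⟩
end

section
/- Let n ≥ 1, let P be an n×n nonnegative row sub-stochastic matrix, let w ∈ ℝ^n with w ≥ 0, and let c ∈ ℝ^n. Let T ⊆ {1,…,n} be the transient part of the graph G_P, i.e., the set of nodes not belonging to any irreducible trapping set. Then any two equilibria x and y of the network (P, w) with exogenous flow c agree on T: x_i = y_i for every i ∈ T. -/
open Matrix Finset Filter Topology

/-- A trapping set of `G_P`: a nonempty set of nodes with no links pointing out of it. -/
def TrapSet {n : ℕ} (P : Matrix (Fin n) (Fin n) ℝ) (S : Finset (Fin n)) : Prop :=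
  S.Nonempty ∧ ∀ i ∈ S, ∀ j ∉ S, P i j = 0

/-- An irreducible trapping set: a trapping set not strictly containing any trapping set. -/
def IrredTrapSet {n : ℕ} (P : Matrix (Fin n) (Fin n) ℝ) (S : Finset (Fin n)) : Prop :=
  TrapSet P S ∧ ∀ S', TrapSet P S' → S' ⊆ S → S' = S

/-!
Saturation is nonexpansive and `P` is nonnegative, so the entrywise distance `d = |x - y|` of two
equilibria satisfies `d ≤ d P`. As the row sums of `P` are at most `1`, the total mass of `d P` is
at most that of `d`, which forces `d = d P`; hence no edge leaves the support of `d`, and that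
support is a trapping set unless it is empty. For any trapping set `A`, the restriction of `d` to
the complement of `A` inherits `d ≤ d P`, since nothing flows out of `A`; it is therefore invariant
too, and so is the difference, the restriction of `d` to `A`. Thus, as long as the support is not
irreducible, it can be cut down to a smaller one that still contains a given node where `d` does
not vanish, and that node ends up in an irreducible trapping set.
-/

/-- A subinvariant measure of the matrix `P`: a nonnegative row vector `d` with `d ≤ d P`
entrywise. The entrywise distance between two equilibria of a network is of this kind. -/
structure IsSubinvariant {ι R : Type*} [Fintype ι] [Semiring R] [PartialOrder R]
    (P : Matrix ι ι R) (d : ι → R) : Prop where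
  nonneg : 0 ≤ d
  le_vecMul : d ≤ d ᵥ* P

namespace IsSubinvariant

section OrderedRing

variable {ι R : Type*} [Fintype ι] [Ring R] [PartialOrder R] [IsOrderedRing R]
  {P : Matrix ι ι R} {d : ι → R}

theorem vecMul_eq (hd : IsSubinvariant P d) (hsub : ∀ i, ∑ j, P i j ≤ 1) : d ᵥ* P = d := by
  have mass_le : ∑ j, (d ᵥ* P) j ≤ ∑ j, d j :=
    calc ∑ j, (d ᵥ* P) j = ∑ i, d i * ∑ j, P i j := by
          simp only [vecMul, dotProduct, mul_sum]
          exact sum_comm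
      _ ≤ ∑ i, d i := sum_le_sum fun i _ => mul_le_of_le_one_right (hd.nonneg i) (hsub i)
  have mass_eq := (sum_le_sum fun j _ => hd.le_vecMul j).antisymm mass_le
  funext j
  exact ((sum_eq_sum_iff_of_le fun j _ => hd.le_vecMul j).1 mass_eq j (mem_univ j)).symm

theorem matrix_apply_eq_zero_of_ne_zero_of_eq_zero [NoZeroDivisors R] (hd : IsSubinvariant P d)
    (hP : ∀ i j, 0 ≤ P i j) (hsub : ∀ i, ∑ j, P i j ≤ 1) {i j : ι} (hi : d i ≠ 0)
    (hj : d j = 0) : P i j = 0 := by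
  have inflow_eq_zero : ∑ k, d k * P k j = 0 := (congrFun (hd.vecMul_eq hsub) j).trans hj
  have edge_eq_zero := (sum_eq_zero_iff_of_nonneg fun k _ =>
    mul_nonneg (hd.nonneg k) (hP k j)).1 inflow_eq_zero i (mem_univ i)
  exact (mul_eq_zero.1 edge_eq_zero).resolve_left hi

theorem indicator_compl (hd : IsSubinvariant P d) (hP : ∀ i j, 0 ≤ P i j) {A : Set ι}
    (hA : ∀ i ∈ A, ∀ j ∉ A, P i j = 0) : IsSubinvariant P (Aᶜ.indicator d) := by
  have indicator_nonneg : 0 ≤ Aᶜ.indicator d := Set.indicator_nonneg fun i _ => hd.nonneg i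
  refine ⟨indicator_nonneg, Set.indicator_le' (fun j hj => ?_) fun j _ =>
    sum_nonneg fun i _ => mul_nonneg (indicator_nonneg i) (hP i j)⟩
  calc d j ≤ ∑ i, d i * P i j := hd.le_vecMul j
    _ = ∑ i, Aᶜ.indicator d i * P i j := sum_congr rfl fun i _ => by
      by_cases hi : i ∈ A
      · rw [hA i hi j hj, mul_zero, mul_zero]
      · rw [Set.indicator_of_mem hi]

theorem indicator (hd : IsSubinvariant P d) (hP : ∀ i j, 0 ≤ P i j)
    (hsub : ∀ i, ∑ j, P i j ≤ 1) {A : Set ι} (hA : ∀ i ∈ A, ∀ j ∉ A, P i j = 0) :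
    IsSubinvariant P (A.indicator d) where
  nonneg := Set.indicator_nonneg fun i _ => hd.nonneg i
  le_vecMul := by
    have indicator_eq_sub : A.indicator d = d - Aᶜ.indicator d := by
      rw [Set.indicator_compl, sub_sub_cancel]
    rw [indicator_eq_sub, sub_vecMul, hd.vecMul_eq hsub, (hd.indicator_compl hP hA).vecMul_eq hsub]

end OrderedRing

section TrappingSets

variable {n : ℕ} {P : Matrix (Fin n) (Fin n) ℝ} {d : Fin n → ℝ}

theorem trapSet_of_support_eq (hd : IsSubinvariant P d) (hP : ∀ i j, 0 ≤ P i j)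
    (hsub : ∀ i, ∑ j, P i j ≤ 1) {S : Finset (Fin n)} (hS : Function.support d = S)
    (hne : S.Nonempty) : TrapSet P S := by
  have mem_iff (i : Fin n) : i ∈ S ↔ d i ≠ 0 := by
    rw [← Finset.mem_coe, ← hS, Function.mem_support]
  exact ⟨hne, fun i hi j hj => hd.matrix_apply_eq_zero_of_ne_zero_of_eq_zero hP hsub
    ((mem_iff i).1 hi) (not_not.1 (mt (mem_iff j).2 hj))⟩

theorem exists_irredTrapSet_of_support_eq (hd : IsSubinvariant P d) (hP : ∀ i j, 0 ≤ P i j)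
    (hsub : ∀ i, ∑ j, P i j ≤ 1) {S : Finset (Fin n)} (hS : Function.support d = S)
    {i : Fin n} (hi : i ∈ S) : ∃ A, IrredTrapSet P A ∧ i ∈ A := by
  induction S using Finset.strongInduction generalizing d with
  | H S ih =>
    by_cases hirred : ∀ A, TrapSet P A → A ⊆ S → A = S
    · exact ⟨S, ⟨hd.trapSet_of_support_eq hP hsub hS ⟨i, hi⟩, hirred⟩, hi⟩
    push Not at hirred
    obtain ⟨A, hA, hAS, hne⟩ := hirred
    by_cases hiA : i ∈ A
    · have support_eq : Function.support ((A : Set (Fin n)).indicator d) = A := by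
        rw [Set.support_indicator, hS, Set.inter_eq_left]
        exact_mod_cast hAS
      exact ih A (hAS.ssubset_of_ne hne) (hd.indicator hP hsub hA.2) support_eq hiA
    · have support_eq : Function.support ((A : Set (Fin n))ᶜ.indicator d) = ↑(S \ A) := by
        rw [Set.support_indicator, hS, coe_sdiff, Set.sdiff_eq, Set.inter_comm]
      exact ih (S \ A) (sdiff_ssubset hAS hA.1) (hd.indicator_compl hP hA.2) support_eq
        (mem_sdiff.2 ⟨hi, hiA⟩)

theorem apply_eq_zero_of_transient (hd : IsSubinvariant P d) (hP : ∀ i j, 0 ≤ P i j)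
    (hsub : ∀ i, ∑ j, P i j ≤ 1) {i : Fin n} (hi : ∀ S, IrredTrapSet P S → i ∉ S) : d i = 0 := by
  by_contra hdi
  obtain ⟨A, hA, hiA⟩ := hd.exists_irredTrapSet_of_support_eq hP hsub
    (Function.support d).toFinite.coe_toFinset.symm
    ((Function.support d).toFinite.mem_toFinset.2 hdi)
  exact hi A hA hiA

end TrappingSets

end IsSubinvariant

theorem abs_vecMul_le {m n R : Type*} [Fintype m] [Ring R] [LinearOrder R] [IsOrderedRing R]
    {P : Matrix m n R} (hP : ∀ i j, 0 ≤ P i j) (v : m → R) : |v ᵥ* P| ≤ |v| ᵥ* P := fun j =>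
  calc |∑ i, v i * P i j| ≤ ∑ i, |v i * P i j| := abs_sum_le_sum_abs _ _
    _ = ∑ i, |v i| * P i j := by simp only [abs_mul, abs_of_nonneg (hP _ _)]

theorem isSubinvariant_abs_sub_of_lipschitzWith {ι : Type*} [Fintype ι] {P : Matrix ι ι ℝ}
    (hP : ∀ i j, 0 ≤ P i j) {f : ι → ℝ → ℝ} (hf : ∀ i, LipschitzWith 1 (f i)) {x y : ι → ℝ}
    (hx : ∀ i, x i = f i ((Pᵀ *ᵥ x) i)) (hy : ∀ i, y i = f i ((Pᵀ *ᵥ y) i)) :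
    IsSubinvariant P |x - y| where
  nonneg := abs_nonneg _
  le_vecMul i :=
    calc |x i - y i| = |f i ((x ᵥ* P) i) - f i ((y ᵥ* P) i)| := by
          rw [hx, hy, mulVec_transpose, mulVec_transpose]
      _ ≤ |(x ᵥ* P) i - (y ᵥ* P) i| := by
          simpa only [Real.dist_eq, NNReal.coe_one, one_mul] using (hf i).dist_le_mul _ _
      _ = |(x - y) ᵥ* P| i := by rw [sub_vecMul, Pi.abs_apply, Pi.sub_apply]
      _ ≤ (|x - y| ᵥ* P) i := abs_vecMul_le hP (x - y) i

theorem equilibria_agree_on_transient_part_general {n : ℕ} {P : Matrix (Fin n) (Fin n) ℝ}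
    (hP : ∀ i j, 0 ≤ P i j) (hsub : ∀ i, ∑ j, P i j ≤ 1)
    {f : Fin n → ℝ → ℝ} (hf : ∀ i, LipschitzWith 1 (f i)) {x y : Fin n → ℝ}
    (hx : ∀ i, x i = f i ((Pᵀ *ᵥ x) i)) (hy : ∀ i, y i = f i ((Pᵀ *ᵥ y) i))
    {i : Fin n} (hi : ∀ S, IrredTrapSet P S → i ∉ S) : x i = y i :=
  have distance_eq_zero : |x i - y i| = 0 :=
    (isSubinvariant_abs_sub_of_lipschitzWith hP hf hx hy).apply_eq_zero_of_transient hP hsub hi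
  sub_eq_zero.1 (abs_eq_zero.1 distance_eq_zero)

/-- any two equilibria agree on the transient part of the graph `G_P`,
i.e., on the set of nodes belonging to no irreducible trapping set. -/
theorem equilibria_agree_on_transient_part
    {n : ℕ} (hn : 1 ≤ n) (P : Matrix (Fin n) (Fin n) ℝ)
    (hP : ∀ i j, 0 ≤ P i j) (hsub : ∀ i, ∑ j, P i j ≤ 1)
    (w : Fin n → ℝ) (hw : 0 ≤ w) (c : Fin n → ℝ)
    (x y : Fin n → ℝ) (hx : IsEquil P w c x) (hy : IsEquil P w c y) :
    ∀ i : Fin n, (∀ S : Finset (Fin n), IrredTrapSet P S → i ∉ S) → x i = y i := fun _ =>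
  equilibria_agree_on_transient_part_general hP hsub (f := fun i t => min (max (t + c i) 0) (w i))
    (fun i => ((isometry_add_right (c i)).lipschitz.max_const 0).min_const (w i))
    (congrFun hx) (congrFun hy)
end

section
/- Let n ≥ 1, let P be an n×n nonnegative row sub-stochastic matrix, let w ∈ ℝ^n with w ≥ 0, and let c ∈ ℝ^n. Let S ⊆ {1,…,n} be an irreducible trapping set of G_P and suppose that either (a) the restricted matrix P_{SS} is out-connected (i.e., the set O_S = {i ∈ S : Σ_{j∈S} P_{ij} < 1} is nonempty and every node of S has a directed path within S to some node of O_S), or (b) for some equilibrium x of (P, w) with exogenous flow c, Σ_{j∈S} ( c_j + Σ_{i∉S} P_{ij} x_i ) ≠ 0. Then any two equilibria x and y of (P, w) with exogenous flow c agree on S: x_j = y_j for every j ∈ S. -/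
open Matrix Finset Filter Topology

/-!
Saturation is 1-Lipschitz, so the distance `d = |x - y|` of two equilibria satisfies `d ≤ Pᵀ d`.
A sub-stochastic `P` cannot increase the total mass of `d`, hence `d = Pᵀ d`, and no mass is lost
at a node where `d` is nonzero. Consequently the nodes of a trapping set at which `x` and `y`
differ themselves form a trapping set on which all row sums are one, and the estimate
`d ≤ Pᵀ d` being tight means that neither equilibrium is saturated there. Summing the unsaturated
equations over a trapping set of such nodes, the internal flow cancels and the exogenous inflow
must vanish. As every trapping set contains an irreducible one, it is enough to exclude this on
irreducible trapping sets.
-/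

section Clamp

variable {G : Type*} [AddCommGroup G] [LinearOrder G] [IsOrderedAddMonoid G]

theorem abs_clamp_sub_clamp_le (a b u v : G) :
    |min (max u a) b - min (max v a) b| ≤ |u - v| :=
  (abs_min_sub_min_le_max _ _ _ _).trans <| max_le
    ((abs_max_sub_max_le_max _ _ _ _).trans (by simp)) (by simp)

theorem clamp_eq_self_of_abs_sub_eq {a b u v : G} (huv : u ≠ v)
    (h : |min (max u a) b - min (max v a) b| = |u - v|) : min (max u a) b = u := by
  -- If clamping moved `u`, it would strictly shrink the distance to any `v ≠ u`.
  grind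

end Clamp

theorem sum_transpose_mulVec {ι κ R : Type*} [Fintype ι] [NonUnitalNonAssocSemiring R]
    (P : Matrix ι κ R) (v : ι → R) (T : Finset κ) :
    ∑ j ∈ T, (Pᵀ *ᵥ v) j = ∑ i, (∑ j ∈ T, P i j) * v i := by
  simp only [mulVec, dotProduct, transpose_apply, sum_mul]
  exact sum_comm

theorem abs_mulVec_le_mulVec_abs {ι κ R : Type*} [Fintype κ] [Ring R] [LinearOrder R]
    [IsOrderedRing R] {A : Matrix ι κ R} (hA : ∀ i j, 0 ≤ A i j) (v : κ → R) :
    |A *ᵥ v| ≤ A *ᵥ |v| := fun i =>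
  (abs_sum_le_sum_abs _ _).trans_eq <| sum_congr rfl fun j _ => by
    rw [abs_mul, abs_of_nonneg (hA i j), Pi.abs_apply]

section SubStochastic

variable {ι R : Type*} [Fintype ι] [Ring R] [PartialOrder R] [IsOrderedRing R]
  {P : Matrix ι ι R} {d : ι → R}

theorem rowSum_mul_le (hsub : ∀ i, ∑ j, P i j ≤ 1) (hd : 0 ≤ d) (i : ι) :
    (∑ j, P i j) * d i ≤ d i :=
  mul_le_of_le_one_left (hd i) (hsub i)

theorem sum_transpose_mulVec_eq_sum_of_le (hsub : ∀ i, ∑ j, P i j ≤ 1) (hd : 0 ≤ d)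
    (hle : d ≤ Pᵀ *ᵥ d) : ∑ j, (Pᵀ *ᵥ d) j = ∑ i, d i := by
  refine le_antisymm ?_ (sum_le_sum fun j _ => hle j)
  rw [sum_transpose_mulVec]
  exact sum_le_sum fun i _ => rowSum_mul_le hsub hd i

theorem transpose_mulVec_eq_self_of_le (hsub : ∀ i, ∑ j, P i j ≤ 1) (hd : 0 ≤ d)
    (hle : d ≤ Pᵀ *ᵥ d) : Pᵀ *ᵥ d = d :=
  funext fun j => ((sum_eq_sum_iff_of_le fun j _ => hle j).1
    (sum_transpose_mulVec_eq_sum_of_le hsub hd hle).symm j (mem_univ j)).symm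

theorem rowSum_mul_eq_self_of_le (hsub : ∀ i, ∑ j, P i j ≤ 1) (hd : 0 ≤ d)
    (hle : d ≤ Pᵀ *ᵥ d) (i : ι) : (∑ j, P i j) * d i = d i :=
  (sum_eq_sum_iff_of_le fun i _ => rowSum_mul_le hsub hd i).1
    ((sum_transpose_mulVec P d univ).symm.trans
      (sum_transpose_mulVec_eq_sum_of_le hsub hd hle)) i (mem_univ i)

end SubStochastic

section TrapSet

variable {n : ℕ} {P : Matrix (Fin n) (Fin n) ℝ} {S : Finset (Fin n)}

theorem irredTrapSet_iff_minimal : IrredTrapSet P S ↔ Minimal (TrapSet P) S := by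
  simp only [IrredTrapSet, minimal_iff, eq_comm]

theorem TrapSet.exists_irredTrapSet_subset (hS : TrapSet P S) :
    ∃ T ⊆ S, IrredTrapSet P T := by
  simpa only [irredTrapSet_iff_minimal] using exists_minimal_le_of_wellFoundedLT _ S hS

theorem TrapSet.sum_eq_rowSum (hS : TrapSet P S) {i : Fin n} (hi : i ∈ S) :
    ∑ j ∈ S, P i j = ∑ j, P i j :=
  sum_subset (subset_univ S) fun j _ hj => hS.2 i hi j hj

theorem TrapSet.sum_transpose_mulVec_eq_add (hS : TrapSet P S) (x : Fin n → ℝ) :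
    ∑ j ∈ S, (Pᵀ *ᵥ x) j =
      ∑ i ∈ S, (∑ j, P i j) * x i + ∑ j ∈ S, ∑ i ∈ Sᶜ, P i j * x i := by
  rw [sum_transpose_mulVec, ← sum_add_sum_compl S]
  congr 1
  · exact sum_congr rfl fun i hi => by rw [hS.sum_eq_rowSum hi]
  · simp only [sum_mul]
    exact sum_comm

end TrapSet

namespace IsEquil

variable {n : ℕ} {P : Matrix (Fin n) (Fin n) ℝ} {w c x y : Fin n → ℝ} {S : Finset (Fin n)}

theorem apply_eq_s14 (hx : IsEquil P w c x) (j : Fin n) :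
    x j = min (max ((Pᵀ *ᵥ x) j + c j) 0) (w j) :=
  congrFun hx j

theorem abs_sub_apply_le (hx : IsEquil P w c x) (hy : IsEquil P w c y) (j : Fin n) :
    |x j - y j| ≤ |(Pᵀ *ᵥ (x - y)) j| := by
  have h := abs_clamp_sub_clamp_le 0 (w j) ((Pᵀ *ᵥ x) j + c j) ((Pᵀ *ᵥ y) j + c j)
  rwa [← hx.apply_eq_s14, ← hy.apply_eq_s14, add_sub_add_right_eq_sub, ← Pi.sub_apply (Pᵀ *ᵥ x),
    ← mulVec_sub] at h

theorem abs_sub_le_transpose_mulVec (hP : ∀ i j, 0 ≤ P i j)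
    (hx : IsEquil P w c x) (hy : IsEquil P w c y) : |x - y| ≤ Pᵀ *ᵥ |x - y| := fun j =>
  (hx.abs_sub_apply_le hy j).trans (abs_mulVec_le_mulVec_abs (fun i j => hP j i) (x - y) j)

theorem transpose_mulVec_abs_sub (hP : ∀ i j, 0 ≤ P i j) (hsub : ∀ i, ∑ j, P i j ≤ 1)
    (hx : IsEquil P w c x) (hy : IsEquil P w c y) : Pᵀ *ᵥ |x - y| = |x - y| :=
  transpose_mulVec_eq_self_of_le hsub (abs_nonneg _) (hx.abs_sub_le_transpose_mulVec hP hy)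

theorem rowSum_eq_one_of_ne (hP : ∀ i j, 0 ≤ P i j) (hsub : ∀ i, ∑ j, P i j ≤ 1)
    (hx : IsEquil P w c x) (hy : IsEquil P w c y) {i : Fin n} (hi : x i ≠ y i) :
    ∑ j, P i j = 1 :=
  (mul_eq_right₀ (abs_ne_zero.2 (sub_ne_zero.2 hi))).1 <|
    rowSum_mul_eq_self_of_le hsub (abs_nonneg (x - y)) (hx.abs_sub_le_transpose_mulVec hP hy) i

theorem apply_eq_of_ne (hP : ∀ i j, 0 ≤ P i j) (hsub : ∀ i, ∑ j, P i j ≤ 1)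
    (hx : IsEquil P w c x) (hy : IsEquil P w c y) {j : Fin n} (hj : x j ≠ y j) :
    x j = (Pᵀ *ᵥ x) j + c j := by
  have htight : |x j - y j| = |((Pᵀ *ᵥ x) j + c j) - ((Pᵀ *ᵥ y) j + c j)| := by
    rw [add_sub_add_right_eq_sub, ← Pi.sub_apply (Pᵀ *ᵥ x), ← mulVec_sub]
    refine (hx.abs_sub_apply_le hy j).antisymm ?_
    calc |(Pᵀ *ᵥ (x - y)) j| ≤ (Pᵀ *ᵥ |x - y|) j :=
          abs_mulVec_le_mulVec_abs (fun i j => hP j i) (x - y) j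
      _ = |x j - y j| := congrFun (hx.transpose_mulVec_abs_sub hP hsub hy) j
  have hinput_ne : (Pᵀ *ᵥ x) j + c j ≠ (Pᵀ *ᵥ y) j + c j := fun h =>
    hj (by rw [hx.apply_eq_s14, hy.apply_eq_s14, h])
  rw [hx.apply_eq_s14 j, hy.apply_eq_s14 j] at htight
  exact (hx.apply_eq_s14 j).trans (clamp_eq_self_of_abs_sub_eq hinput_ne htight)

theorem apply_ne_of_pos (hP : ∀ i j, 0 ≤ P i j) (hsub : ∀ i, ∑ j, P i j ≤ 1)
    (hx : IsEquil P w c x) (hy : IsEquil P w c y) {i j : Fin n} (hi : x i ≠ y i)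
    (hij : 0 < P i j) : x j ≠ y j := by
  rw [← sub_ne_zero, ← abs_pos] at hi ⊢
  calc 0 < P i j * |x i - y i| := mul_pos hij hi
    _ ≤ (Pᵀ *ᵥ |x - y|) j :=
        single_le_sum (f := fun i => P i j * |x i - y i|)
          (fun i _ => mul_nonneg (hP i j) (abs_nonneg _)) (mem_univ i)
    _ = |x j - y j| := congrFun (hx.transpose_mulVec_abs_sub hP hsub hy) j

theorem trapSet_filter_ne (hP : ∀ i j, 0 ≤ P i j) (hsub : ∀ i, ∑ j, P i j ≤ 1)
    (hS : TrapSet P S) (hx : IsEquil P w c x) (hy : IsEquil P w c y)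
    (hne : ∃ k ∈ S, x k ≠ y k) : TrapSet P {i ∈ S | x i ≠ y i} := by
  refine ⟨filter_nonempty_iff.2 hne, fun i hi j hj => ?_⟩
  obtain ⟨hiS, hi⟩ := mem_filter.1 hi
  by_contra hij
  have hjS : j ∈ S := by_contra fun hjS => hij (hS.2 i hiS j hjS)
  exact hj (mem_filter.2 ⟨hjS, hx.apply_ne_of_pos hP hsub hy hi ((hP i j).lt_of_ne' hij)⟩)

theorem forall_ne_of_irredTrapSet (hP : ∀ i j, 0 ≤ P i j) (hsub : ∀ i, ∑ j, P i j ≤ 1)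
    (hS : IrredTrapSet P S) (hx : IsEquil P w c x) (hy : IsEquil P w c y)
    (hne : ∃ k ∈ S, x k ≠ y k) : ∀ j ∈ S, x j ≠ y j :=
  filter_eq_self.1 (hS.2 _ (hx.trapSet_filter_ne hP hsub hS.1 hy hne) (filter_subset _ _))

theorem inflow_eq_zero_of_forall_ne (hP : ∀ i j, 0 ≤ P i j) (hsub : ∀ i, ∑ j, P i j ≤ 1)
    (hS : TrapSet P S) (hx : IsEquil P w c x) (hy : IsEquil P w c y)
    (hne : ∀ j ∈ S, x j ≠ y j) :
    ∑ j ∈ S, (c j + ∑ i ∈ Sᶜ, P i j * x i) = 0 := by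
  have hconserve : ∑ i ∈ S, (∑ j, P i j) * x i = ∑ i ∈ S, x i :=
    sum_congr rfl fun i hi => by rw [hx.rowSum_eq_one_of_ne hP hsub hy (hne i hi), one_mul]
  have hbalance : ∑ j ∈ S, x j =
      ∑ i ∈ S, x i + ∑ j ∈ S, ∑ i ∈ Sᶜ, P i j * x i + ∑ j ∈ S, c j :=
    calc ∑ j ∈ S, x j = ∑ j ∈ S, ((Pᵀ *ᵥ x) j + c j) :=
          sum_congr rfl fun j hj => hx.apply_eq_of_ne hP hsub hy (hne j hj)
      _ = _ := by rw [sum_add_distrib, hS.sum_transpose_mulVec_eq_add, hconserve]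
  rw [sum_add_distrib]
  linarith

theorem forall_eq_of_rowSum_lt_one (hP : ∀ i j, 0 ≤ P i j) (hsub : ∀ i, ∑ j, P i j ≤ 1)
    (hS : IrredTrapSet P S) (hlt : ∃ i ∈ S, ∑ j ∈ S, P i j < 1)
    (hx : IsEquil P w c x) (hy : IsEquil P w c y) : ∀ j ∈ S, x j = y j := by
  by_contra! hne
  obtain ⟨i, hi, hlt⟩ := hlt
  have hxy := hx.forall_ne_of_irredTrapSet hP hsub hS hy hne i hi
  rw [hS.1.sum_eq_rowSum hi, hx.rowSum_eq_one_of_ne hP hsub hy hxy] at hlt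
  exact hlt.false

theorem forall_eq_of_inflow_ne_zero (hP : ∀ i j, 0 ≤ P i j) (hsub : ∀ i, ∑ j, P i j ≤ 1)
    (hS : IrredTrapSet P S) (hx : IsEquil P w c x)
    (hflow : ∑ j ∈ S, (c j + ∑ i ∈ Sᶜ, P i j * x i) ≠ 0) (hy : IsEquil P w c y) :
    ∀ j ∈ S, x j = y j := by
  by_contra! hne
  exact hflow <| hx.inflow_eq_zero_of_forall_ne hP hsub hS.1 hy <|
    hx.forall_ne_of_irredTrapSet hP hsub hS hy hne

end IsEquil

theorem equilibria_agree_on_trapping_set_unique_cases_general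
    {n : ℕ} {P : Matrix (Fin n) (Fin n) ℝ}
    (hP : ∀ i j, 0 ≤ P i j) (hsub : ∀ i, ∑ j, P i j ≤ 1) {w c : Fin n → ℝ}
    {S : Finset (Fin n)} (hS : TrapSet P S)
    (hcond : ∀ T ⊆ S, IrredTrapSet P T →
      (∃ i ∈ T, ∑ j ∈ T, P i j < 1) ∨
      (∃ x : Fin n → ℝ, IsEquil P w c x ∧
        ∑ j ∈ T, (c j + ∑ i ∈ Tᶜ, P i j * x i) ≠ 0)) :
    ∀ x y : Fin n → ℝ, IsEquil P w c x → IsEquil P w c y → ∀ j ∈ S, x j = y j := by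
  intro x y hx hy
  by_contra! hne
  obtain ⟨T, hTD, hT⟩ := (hx.trapSet_filter_ne hP hsub hS hy hne).exists_irredTrapSet_subset
  obtain ⟨k, hk⟩ := hT.1.1
  refine (mem_filter.1 (hTD hk)).2 ?_
  rcases hcond T (hTD.trans (filter_subset _ _)) hT with hlt | ⟨z, hz, hflow⟩
  · exact hx.forall_eq_of_rowSum_lt_one hP hsub hT hlt hy k hk
  · exact (hz.forall_eq_of_inflow_ne_zero hP hsub hT hflow hx k hk).symm.trans
      (hz.forall_eq_of_inflow_ne_zero hP hsub hT hflow hy k hk)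

/-- on an irreducible trapping set `S` whose restricted matrix is
out-connected, or on which the total incoming exogenous flow (at some equilibrium) is
nonzero, any two equilibria agree. -/
theorem equilibria_agree_on_trapping_set_unique_cases
    {n : ℕ} (hn : 1 ≤ n) (P : Matrix (Fin n) (Fin n) ℝ)
    (hP : ∀ i j, 0 ≤ P i j) (hsub : ∀ i, ∑ j, P i j ≤ 1)
    (w : Fin n → ℝ) (hw : 0 ≤ w) (c : Fin n → ℝ)
    (S : Finset (Fin n)) (hS : IrredTrapSet P S)
    (hcond :
      ((∃ i ∈ S, ∑ j ∈ S, P i j < 1) ∧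
        ∀ i ∈ S, ∃ j ∈ S,
          Relation.ReflTransGen (fun a b => a ∈ S ∧ b ∈ S ∧ 0 < P a b) i j ∧
          ∑ k ∈ S, P j k < 1) ∨
      (∃ x : Fin n → ℝ, IsEquil P w c x ∧
        ∑ j ∈ S, (c j + ∑ i ∈ Sᶜ, P i j * x i) ≠ 0)) :
    ∀ x y : Fin n → ℝ, IsEquil P w c x → IsEquil P w c y → ∀ j ∈ S, x j = y j :=
  equilibria_agree_on_trapping_set_unique_cases_general hP hsub hS.1 fun T hTS hT => by
    obtain rfl := hS.2 T hT.1 hTS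
    exact hcond.imp_left And.left
end

section
/- Let n ≥ 1, let P be an n×n nonnegative row sub-stochastic matrix, let w ∈ ℝ^n with w ≥ 0, and let c ∈ ℝ^n. Let S ⊆ {1,…,n} be an irreducible trapping set of G_P whose restricted matrix P_{SS} is row-stochastic (Σ_{j∈S} P_{ij} = 1 for all i ∈ S). Let x be an equilibrium of (P, w) with exogenous flow c, let d ∈ ℝ^S be defined by d_j = c_j + Σ_{i∉S} P_{ij} x_i for j ∈ S, and assume Σ_{j∈S} d_j = 0. Let π ∈ ℝ^S be the invariant probability vector of P_{SS} (π = (P_{SS})ᵀπ, Σ_{j∈S} π_j = 1, π_j > 0), and suppose ν ∈ ℝ^S satisfies ν = (P_{SS})ᵀν + d. Then: the restriction to S is non-unique across equilibria (i.e., there exist equilibria x, y with x_j ≠ y_j for some j ∈ S) if and only if min_{i∈S} (ν_i / π_i) + min_{i∈S} ((w_i − ν_i) / π_i) > 0; moreover, in that case, for every equilibrium y there exists α with −min_{i∈S} (ν_i / π_i) ≤ α ≤ min_{i∈S} ((w_i − ν_i) / π_i) such that y_j = ν_j + α π_j for all j ∈ S. -/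
open Matrix Finset Filter Topology

/-!
For two equilibria `x`, `y` the vector `u = |x - y|` satisfies `u ≤ Pᵀu` because saturation is
nonexpansive; summing all coordinates and using that `P` is sub-stochastic turns this into
`u = Pᵀu`. Summing over `S`, whose block is stochastic, shows that no part of `u` flows into `S`
from outside, so `x` and `y` feed the same flow `d` into `S` and `u` is invariant on `S`. By
irreducibility `u` is zero on all of `S` or nowhere on `S`. In the latter case saturation
preserves a positive distance at every node of `S`, which it does only where it acts as the
identity: `x` solves the linear balance `x = (P_SS)ᵀx + d` on `S` and hence is `ν + α π` there.
Conversely, every `ν + α π` with entries between `0` and `w` extends to an equilibrium, so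
non-uniqueness means that the interval of admissible `α` has more than one point.
-/

section Clamp

variable {K : Type*} [AddCommGroup K] [LinearOrder K] [IsOrderedAddMonoid K]

theorem abs_min_max_sub_le (a b l u : K) :
    |min (max a l) u - min (max b l) u| ≤ |a - b| :=
  (abs_inf_sub_inf_le_abs _ _ _).trans (abs_sup_sub_sup_le_abs _ _ _)

theorem abs_min_max_sub_lt {a b l u : K} (hab : a ≠ b) (ha : min (max a l) u ≠ a) :
    |min (max a l) u - min (max b l) u| < |a - b| := by
  have hout : a < l ∨ u < a := by
    by_contra! hin
    exact ha (by rw [max_eq_left hin.1, min_eq_left hin.2])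
  have hpos : 0 < |a - b| := abs_pos.2 (sub_ne_zero.2 hab)
  rcases hout with hal | hua
  · refine (abs_inf_sub_inf_le_abs _ _ _).trans_lt ?_
    rw [max_eq_right hal.le]
    rcases le_total b l with hbl | hlb
    · simpa [max_eq_right hbl] using hpos
    · rw [max_eq_left hlb, abs_sub_comm, abs_sub_comm a, abs_of_nonneg (sub_nonneg.2 hlb)]
      exact (sub_lt_sub_left hal b).trans_le (le_abs_self _)
  · rw [min_max_distrib_right, min_max_distrib_right, min_eq_right hua.le]
    refine (abs_sup_sub_sup_le_abs _ _ _).trans_lt ?_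
    rcases le_total u b with hub | hbu
    · simpa [min_eq_right hub] using hpos
    · rw [min_eq_left hbu, abs_of_nonneg (sub_nonneg.2 hbu)]
      exact (sub_lt_sub_right hua b).trans_le (le_abs_self _)

end Clamp

section BoxParams

variable {ι K : Type*} [Field K] [LinearOrder K] [IsStrictOrderedRing K]

/-- The parameters `α` for which the point `ν + α π` of a line lies in the box `[0, w]` on all
coordinates in `S`. -/
def boxParams (S : Finset ι) (w ν π : ι → K) : Set K :=
  {α | ∀ i ∈ S, ν i + α * π i ∈ Set.Icc 0 (w i)}

theorem boxParams_eq_Icc {S : Finset ι} (hS : S.Nonempty) {w ν π : ι → K}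
    (hπ : ∀ i ∈ S, 0 < π i) :
    boxParams S w ν π =
      Set.Icc (-S.inf' hS fun i => ν i / π i) (S.inf' hS fun i => (w i - ν i) / π i) := by
  ext α
  rw [Set.mem_Icc, neg_le, le_inf'_iff, le_inf'_iff, ← forall₂_and]
  refine forall₂_congr fun i hi => ?_
  rw [le_div_iff₀ (hπ i hi), le_div_iff₀ (hπ i hi), neg_mul, neg_le_iff_add_nonneg,
    le_sub_iff_add_le', Set.mem_Icc]

theorem boxParams_nontrivial_iff {S : Finset ι} (hS : S.Nonempty) {w ν π : ι → K}
    (hπ : ∀ i ∈ S, 0 < π i) :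
    (boxParams S w ν π).Nontrivial ↔
      0 < S.inf' hS (fun i => ν i / π i) + S.inf' hS (fun i => (w i - ν i) / π i) := by
  rw [boxParams_eq_Icc hS hπ, ← Set.not_subsingleton_iff, Set.subsingleton_Icc_iff, not_le,
    neg_lt_iff_pos_add']

end BoxParams

section Balance

variable {ι R : Type*} [CommRing R] {P : Matrix ι ι R} {S : Finset ι}

/-- `z` is a solution on `S` of the linear flow balance `z = (P_SS)ᵀ z + b`. -/
def IsBalancedOn (P : Matrix ι ι R) (S : Finset ι) (b z : ι → R) : Prop :=
  ∀ j ∈ S, z j = ∑ i ∈ S, P i j * z i + b j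

/-- `u` restricts to an invariant vector of the block `P_SS`, that is, `u = (P_SS)ᵀ u` on `S`. -/
def IsInvariantOn (P : Matrix ι ι R) (S : Finset ι) (u : ι → R) : Prop :=
  ∀ j ∈ S, u j = ∑ i ∈ S, P i j * u i

/-- The flow entering each node of the block `S` when the nodes outside `S` are in state `x`:
exogenous flow plus flow from `Sᶜ`. This is the vector `d` of the theorem. -/
def blockInflow [Fintype ι] [DecidableEq ι] (P : Matrix ι ι R) (S : Finset ι) (c x : ι → R) :
    ι → R :=
  fun j => c j + ∑ i ∈ Sᶜ, P i j * x i

theorem sum_add_blockInflow [Fintype ι] [DecidableEq ι] (S : Finset ι) (c x : ι → R) (j : ι) :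
    ∑ i ∈ S, P i j * x i + blockInflow P S c x j = ∑ i, P i j * x i + c j := by
  rw [blockInflow, ← sum_add_sum_compl S]
  ring

theorem IsBalancedOn.congr {b b' z : ι → R} (hz : IsBalancedOn P S b z)
    (h : ∀ j ∈ S, b j = b' j) : IsBalancedOn P S b' z :=
  fun j hj => h j hj ▸ hz j hj

theorem IsBalancedOn.sub {b z z' : ι → R} (hz : IsBalancedOn P S b z)
    (hz' : IsBalancedOn P S b z') : IsInvariantOn P S (z - z') := fun j hj => by
  simp only [Pi.sub_apply, mul_sub, sum_sub_distrib]
  rw [hz j hj, hz' j hj, add_sub_add_right_eq_sub]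

theorem IsBalancedOn.add_smul {b z u : ι → R} (hz : IsBalancedOn P S b z)
    (hu : IsInvariantOn P S u) (a : R) : IsBalancedOn P S b (z + a • u) := fun j hj => by
  simp only [Pi.add_apply, Pi.smul_apply, smul_eq_mul, mul_add, sum_add_distrib,
    mul_left_comm _ a, ← mul_sum]
  rw [← hu j hj, add_right_comm, ← hz j hj]

end Balance

section Stochastic

variable {ι R : Type*} [Fintype ι] [CommRing R] {P : Matrix ι ι R} {S : Finset ι}

theorem abs_sum_mul_sub_sum_mul_le [LinearOrder R] [IsOrderedRing R] (hP : ∀ i j, 0 ≤ P i j)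
    (x y : ι → R) (j : ι) :
    |∑ i, P i j * x i - ∑ i, P i j * y i| ≤ ∑ i, P i j * |x - y| i := by
  rw [← sum_sub_distrib]
  refine (abs_sum_le_sum_abs _ _).trans_eq (sum_congr rfl fun i _ => ?_)
  rw [← mul_sub, abs_mul, abs_of_nonneg (hP i j), Pi.abs_apply, Pi.sub_apply]

variable [PartialOrder R] [IsOrderedRing R] {u : ι → R}

theorem eq_sum_mul_of_le_sum_mul (hsub : ∀ i, ∑ j, P i j ≤ 1) (hu : 0 ≤ u)
    (hle : ∀ j, u j ≤ ∑ i, P i j * u i) (j : ι) : u j = ∑ i, P i j * u i := by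
  have htotal : ∑ j, ∑ i, P i j * u i ≤ ∑ i, u i := by
    rw [sum_comm]
    refine sum_le_sum fun i _ => ?_
    rw [← sum_mul]
    exact mul_le_of_le_one_left (hu i) (hsub i)
  exact (sum_eq_sum_iff_of_le fun j _ => hle j).1
    ((sum_le_sum fun j _ => hle j).antisymm htotal) j (mem_univ j)

theorem mul_eq_zero_of_stochastic_block (hP : ∀ i j, 0 ≤ P i j)
    (hstoc : ∀ i ∈ S, ∑ j ∈ S, P i j = 1) (hu : 0 ≤ u)
    (hinv : ∀ j ∈ S, u j = ∑ i, P i j * u i) {i j : ι} (hi : i ∉ S) (hj : j ∈ S) :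
    P i j * u i = 0 := by
  classical
  have hnonneg : ∀ i j, 0 ≤ P i j * u i := fun i j => mul_nonneg (hP i j) (hu i)
  have hinner : ∑ j ∈ S, ∑ i ∈ S, P i j * u i = ∑ i ∈ S, u i := by
    rw [sum_comm]
    exact sum_congr rfl fun i hi => by rw [← sum_mul, hstoc i hi, one_mul]
  have houter : ∑ j ∈ S, ∑ i ∈ Sᶜ, P i j * u i = 0 := by
    refine left_eq_add.1 (?_ : ∑ i ∈ S, u i = _ + _)
    rw [← hinner, ← sum_add_distrib]
    refine (hinner.trans (sum_congr rfl hinv)).trans (sum_congr rfl fun j _ => ?_)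
    rw [sum_add_sum_compl]
  have hcolumn := (sum_eq_zero_iff_of_nonneg fun j _ => sum_nonneg fun i _ => hnonneg i j).1
    houter j hj
  exact (sum_eq_zero_iff_of_nonneg fun i _ => hnonneg i j).1 hcolumn i (mem_compl.2 hi)

theorem isInvariantOn_of_stochastic_block (hP : ∀ i j, 0 ≤ P i j)
    (hstoc : ∀ i ∈ S, ∑ j ∈ S, P i j = 1) (hu : 0 ≤ u)
    (hinv : ∀ j ∈ S, u j = ∑ i, P i j * u i) : IsInvariantOn P S u := fun j hj => by
  classical
  have hcompl : ∑ i ∈ Sᶜ, P i j * u i = 0 :=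
    sum_eq_zero fun i hi =>
      mul_eq_zero_of_stochastic_block hP hstoc hu hinv (mem_compl.1 hi) hj
  rw [hinv j hj, ← sum_add_sum_compl S, hcompl, add_zero]

end Stochastic

section TrappingSet

variable {n : ℕ} {P : Matrix (Fin n) (Fin n) ℝ} {S : Finset (Fin n)} {u : Fin n → ℝ}

theorem TrapSet.filter_ne_zero (hP : ∀ i j, 0 ≤ P i j) (hS : TrapSet P S)
    (hu : ∀ j ∈ S, 0 ≤ u j) (hinv : IsInvariantOn P S u) (hne : ∃ j ∈ S, u j ≠ 0) :
    TrapSet P {j ∈ S | u j ≠ 0} := by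
  refine ⟨filter_nonempty_iff.2 hne, fun i hi j hj => ?_⟩
  obtain ⟨hiS, hui⟩ := mem_filter.1 hi
  by_cases hjS : j ∈ S
  · have huj : u j = 0 := by_contra fun h => hj (mem_filter.2 ⟨hjS, h⟩)
    have hsum : ∑ i ∈ S, P i j * u i = 0 := (hinv j hjS).symm.trans huj
    have hterm := (sum_eq_zero_iff_of_nonneg fun i hi => mul_nonneg (hP i j) (hu i hi)).1 hsum i hiS
    exact (mul_eq_zero.1 hterm).resolve_right hui
  · exact hS.2 i hiS j hjS

theorem IrredTrapSet.eq_zero_of_isInvariantOn (hP : ∀ i j, 0 ≤ P i j) (hS : IrredTrapSet P S)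
    (hu : ∀ j ∈ S, 0 ≤ u j) (hinv : IsInvariantOn P S u) (hzero : ∃ k ∈ S, u k = 0) :
    ∀ j ∈ S, u j = 0 := by
  by_contra! hne
  obtain ⟨k, hk, huk⟩ := hzero
  have hsupp := hS.2 _ (hS.1.filter_ne_zero hP hu hinv hne) (filter_subset _ _)
  rw [← hsupp, mem_filter] at hk
  exact hk.2 huk

-- Taking `α` minimal among the ratios makes `z - (ν + α π)` nonnegative with a zero in `S`.
theorem IrredTrapSet.exists_eq_add_mul_of_isBalancedOn (hP : ∀ i j, 0 ≤ P i j)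
    (hS : IrredTrapSet P S) {b z ν π : Fin n → ℝ} (hπ : IsInvariantOn P S π)
    (hπpos : ∀ j ∈ S, 0 < π j) (hz : IsBalancedOn P S b z) (hν : IsBalancedOn P S b ν) :
    ∃ α : ℝ, ∀ j ∈ S, z j = ν j + α * π j := by
  obtain ⟨k, hk, hmin⟩ := S.exists_min_image (fun i => (z i - ν i) / π i) hS.1.1
  set α := (z k - ν k) / π k with hα
  refine ⟨α, fun j hj => sub_eq_zero.1 ?_⟩
  refine hS.eq_zero_of_isInvariantOn hP (fun i hi => ?_) (hz.sub (hν.add_smul hπ α))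
    ⟨k, hk, ?_⟩ j hj
  · have hle : α * π i ≤ z i - ν i := (le_div_iff₀ (hπpos i hi)).1 (hmin i hi)
    simpa [add_comm] using add_le_of_le_sub_right hle
  · simp [hα, div_mul_cancel₀ _ (hπpos k hk).ne']

end TrappingSet

section Equilibrium

variable {n : ℕ} {P : Matrix (Fin n) (Fin n) ℝ} {S : Finset (Fin n)} {w c x y z : Fin n → ℝ}

theorem isEquil_iff :
    IsEquil P w c x ↔ ∀ j, x j = min (max (∑ i, P i j * x i + c j) 0) (w j) :=
  funext_iff

theorem IsEquil.mem_Icc (hw : 0 ≤ w) (hx : IsEquil P w c x) (j : Fin n) :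
    x j ∈ Set.Icc 0 (w j) := by
  rw [isEquil_iff.1 hx j]
  exact ⟨le_min (le_max_right _ _) (hw j), min_le_right _ _⟩

theorem IsEquil.abs_sub_eq_sum (hP : ∀ i j, 0 ≤ P i j) (hsub : ∀ i, ∑ j, P i j ≤ 1)
    (hx : IsEquil P w c x) (hy : IsEquil P w c y) (j : Fin n) :
    |x - y| j = ∑ i, P i j * |x - y| i := by
  refine eq_sum_mul_of_le_sum_mul hsub (abs_nonneg _) (fun j => ?_) j
  calc |x j - y j| ≤ |(∑ i, P i j * x i + c j) - (∑ i, P i j * y i + c j)| := by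
        conv_lhs => rw [isEquil_iff.1 hx j, isEquil_iff.1 hy j]
        exact abs_min_max_sub_le _ _ _ _
    _ ≤ ∑ i, P i j * |x - y| i := by
        rw [add_sub_add_right_eq_sub]
        exact abs_sum_mul_sub_sum_mul_le hP x y j

theorem IsEquil.isInvariantOn_abs_sub (hP : ∀ i j, 0 ≤ P i j) (hsub : ∀ i, ∑ j, P i j ≤ 1)
    (hstoc : ∀ i ∈ S, ∑ j ∈ S, P i j = 1) (hx : IsEquil P w c x) (hy : IsEquil P w c y) :
    IsInvariantOn P S |x - y| :=
  isInvariantOn_of_stochastic_block hP hstoc (abs_nonneg _)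
    fun j _ => hx.abs_sub_eq_sum hP hsub hy j

theorem IsEquil.blockInflow_eq (hP : ∀ i j, 0 ≤ P i j) (hsub : ∀ i, ∑ j, P i j ≤ 1)
    (hstoc : ∀ i ∈ S, ∑ j ∈ S, P i j = 1) (hx : IsEquil P w c x) (hy : IsEquil P w c y)
    {j : Fin n} (hj : j ∈ S) : blockInflow P S c x j = blockInflow P S c y j := by
  refine congrArg (c j + ·) (sum_congr rfl fun i hi => ?_)
  have hleak : P i j * |x - y| i = 0 := mul_eq_zero_of_stochastic_block hP hstoc (abs_nonneg _)
    (fun j _ => hx.abs_sub_eq_sum hP hsub hy j) (mem_compl.1 hi) hj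
  refine mul_eq_mul_left_iff.2 ((mul_eq_zero.1 hleak).symm.imp_left fun h => ?_)
  exact sub_eq_zero.1 (abs_eq_zero.1 h)

theorem IsEquil.forall_ne_of_exists_ne (hP : ∀ i j, 0 ≤ P i j) (hsub : ∀ i, ∑ j, P i j ≤ 1)
    (hS : IrredTrapSet P S) (hstoc : ∀ i ∈ S, ∑ j ∈ S, P i j = 1) (hx : IsEquil P w c x)
    (hy : IsEquil P w c y) (hne : ∃ j ∈ S, x j ≠ y j) : ∀ j ∈ S, x j ≠ y j := by
  contrapose! hne
  have habs : ∀ j, |x - y| j = 0 ↔ x j = y j := fun j => abs_eq_zero.trans sub_eq_zero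
  simp only [← habs] at hne ⊢
  exact hS.eq_zero_of_isInvariantOn hP (fun j _ => abs_nonneg (x j - y j))
    (hx.isInvariantOn_abs_sub hP hsub hstoc hy) hne

theorem IsEquil.isBalancedOn_of_exists_ne (hP : ∀ i j, 0 ≤ P i j)
    (hsub : ∀ i, ∑ j, P i j ≤ 1) (hS : IrredTrapSet P S)
    (hstoc : ∀ i ∈ S, ∑ j ∈ S, P i j = 1) (hx : IsEquil P w c x) (hy : IsEquil P w c y)
    (hne : ∃ j ∈ S, x j ≠ y j) : IsBalancedOn P S (blockInflow P S c x) x := fun j hj => by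
  rw [sum_add_blockInflow]
  have hxy : x j ≠ y j := hx.forall_ne_of_exists_ne hP hsub hS hstoc hy hne j hj
  have hexpand : |(∑ i, P i j * x i + c j) - (∑ i, P i j * y i + c j)| ≤ |x j - y j| := by
    rw [add_sub_add_right_eq_sub]
    exact (abs_sum_mul_sub_sum_mul_le hP x y j).trans_eq (hx.abs_sub_eq_sum hP hsub hy j).symm
  have hinput_ne : ∑ i, P i j * x i + c j ≠ ∑ i, P i j * y i + c j := fun h =>
    hxy (by rw [isEquil_iff.1 hx j, isEquil_iff.1 hy j, h])
  by_contra hclip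
  have hshrink := abs_min_max_sub_lt hinput_ne fun h => hclip ((isEquil_iff.1 hx j).trans h)
  rw [← isEquil_iff.1 hx j, ← isEquil_iff.1 hy j] at hshrink
  exact hshrink.not_ge hexpand

theorem IsEquil.piecewise (hS : TrapSet P S) (hx : IsEquil P w c x)
    (hz : IsBalancedOn P S (blockInflow P S c x) z) (hbox : ∀ j ∈ S, z j ∈ Set.Icc 0 (w j)) :
    IsEquil P w c (S.piecewise z x) := by
  refine isEquil_iff.2 fun j => ?_
  have hinput : ∑ i, P i j * S.piecewise z x i + c j =
      ∑ i ∈ S, P i j * z i + blockInflow P S c x j := by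
    rw [← sum_add_blockInflow S]
    refine congrArg₂ (· + ·) (sum_congr rfl fun i hi => ?_)
      (congrArg (c j + ·) (sum_congr rfl fun i hi => ?_))
    · rw [piecewise_eq_of_mem _ _ _ hi]
    · rw [piecewise_eq_of_notMem _ _ _ (mem_compl.1 hi)]
  rw [hinput]
  by_cases hj : j ∈ S
  · rw [piecewise_eq_of_mem _ _ _ hj, ← hz j hj, max_eq_left (hbox j hj).1,
      min_eq_left (hbox j hj).2]
  · have hno_link : ∀ v : Fin n → ℝ, ∑ i ∈ S, P i j * v i = 0 := fun v =>
      sum_eq_zero fun i hi => by rw [hS.2 i hi j hj, zero_mul]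
    rw [piecewise_eq_of_notMem _ _ _ hj, (hno_link z).trans (hno_link x).symm,
      sum_add_blockInflow]
    exact isEquil_iff.1 hx j

section Nonuniqueness

variable {ν π : Fin n → ℝ}

theorem IsEquil.exists_mem_boxParams_of_exists_ne (hP : ∀ i j, 0 ≤ P i j)
    (hsub : ∀ i, ∑ j, P i j ≤ 1) (hw : 0 ≤ w) (hS : IrredTrapSet P S)
    (hstoc : ∀ i ∈ S, ∑ j ∈ S, P i j = 1) (hπ : IsInvariantOn P S π)
    (hπpos : ∀ j ∈ S, 0 < π j) (hx : IsEquil P w c x)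
    (hν : IsBalancedOn P S (blockInflow P S c x) ν) (hy : IsEquil P w c y) (hz : IsEquil P w c z)
    (hne : ∃ j ∈ S, y j ≠ z j) : ∃ α ∈ boxParams S w ν π, ∀ j ∈ S, y j = ν j + α * π j := by
  have hνy : IsBalancedOn P S (blockInflow P S c y) ν :=
    hν.congr fun j hj => hx.blockInflow_eq hP hsub hstoc hy hj
  obtain ⟨α, hα⟩ := hS.exists_eq_add_mul_of_isBalancedOn hP hπ hπpos
    (hy.isBalancedOn_of_exists_ne hP hsub hS hstoc hz hne) hνy
  exact ⟨α, fun j hj => hα j hj ▸ hy.mem_Icc hw j, hα⟩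

theorem IsEquil.exists_isEquil_ne (hS : TrapSet P S) (hπ : IsInvariantOn P S π)
    (hπpos : ∀ j ∈ S, 0 < π j) (hx : IsEquil P w c x)
    (hν : IsBalancedOn P S (blockInflow P S c x) ν) (hbox : (boxParams S w ν π).Nontrivial)
    (y : Fin n → ℝ) : ∃ z, IsEquil P w c z ∧ ∃ j ∈ S, y j ≠ z j := by
  obtain ⟨k, hk⟩ := hS.1
  obtain ⟨α, hα, hαne⟩ := hbox.exists_ne ((y k - ν k) / π k)
  refine ⟨_, hx.piecewise hS (hν.add_smul hπ α) hα, k, hk, fun h => hαne ?_⟩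
  rw [h, piecewise_eq_of_mem _ _ _ hk]
  simp [mul_div_cancel_right₀ _ (hπpos k hk).ne']

theorem IsEquil.exists_isEquil_ne_iff (hP : ∀ i j, 0 ≤ P i j) (hsub : ∀ i, ∑ j, P i j ≤ 1)
    (hw : 0 ≤ w) (hS : IrredTrapSet P S) (hstoc : ∀ i ∈ S, ∑ j ∈ S, P i j = 1)
    (hπ : IsInvariantOn P S π) (hπpos : ∀ j ∈ S, 0 < π j) (hx : IsEquil P w c x)
    (hν : IsBalancedOn P S (blockInflow P S c x) ν) :
    (∃ x' y', IsEquil P w c x' ∧ IsEquil P w c y' ∧ ∃ j ∈ S, x' j ≠ y' j) ↔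
      (boxParams S w ν π).Nontrivial := by
  constructor
  · rintro ⟨x', y', hx', hy', j, hj, hne⟩
    obtain ⟨α, hα, hxα⟩ := hx.exists_mem_boxParams_of_exists_ne hP hsub hw hS hstoc hπ hπpos hν
      hx' hy' ⟨j, hj, hne⟩
    obtain ⟨β, hβ, hyβ⟩ := hx.exists_mem_boxParams_of_exists_ne hP hsub hw hS hstoc hπ hπpos hν
      hy' hx' ⟨j, hj, hne.symm⟩
    exact ⟨α, hα, β, hβ, fun h => hne (by rw [hxα j hj, hyβ j hj, h])⟩
  · intro hbox
    obtain ⟨z, hz, hne⟩ := hx.exists_isEquil_ne hS.1 hπ hπpos hν hbox x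
    exact ⟨x, z, hx, hz, hne⟩

end Nonuniqueness

end Equilibrium

/-- on an irreducible trapping set `S` with stochastic block and zero total
incoming exogenous flow `d`, non-uniqueness of the restriction of the equilibria to `S`
holds iff `min_{i∈S} (νᵢ/πᵢ) + min_{i∈S} ((wᵢ − νᵢ)/πᵢ) > 0`; moreover, in that case,
the restriction of every equilibrium to `S` is of the form `ν + α π` with
`−min_{i∈S} (νᵢ/πᵢ) ≤ α ≤ min_{i∈S} ((wᵢ − νᵢ)/πᵢ)`. -/
theorem nonuniqueness_on_trapping_set
    {n : ℕ} (hn : 1 ≤ n) (P : Matrix (Fin n) (Fin n) ℝ)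
    (hP : ∀ i j, 0 ≤ P i j) (hsub : ∀ i, ∑ j, P i j ≤ 1)
    (w : Fin n → ℝ) (hw : 0 ≤ w) (c : Fin n → ℝ)
    (S : Finset (Fin n)) (hS : IrredTrapSet P S)
    (hstoc : ∀ i ∈ S, ∑ j ∈ S, P i j = 1)
    (x : Fin n → ℝ) (hx : IsEquil P w c x)
    (d : Fin n → ℝ) (hd : ∀ j ∈ S, d j = c j + ∑ i ∈ Sᶜ, P i j * x i)
    (hdsum : ∑ j ∈ S, d j = 0)
    (π : Fin n → ℝ) (hπ1 : ∀ j ∈ S, π j = ∑ i ∈ S, P i j * π i)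
    (hπ2 : ∑ j ∈ S, π j = 1) (hπ3 : ∀ j ∈ S, 0 < π j)
    (ν : Fin n → ℝ) (hν : ∀ j ∈ S, ν j = (∑ i ∈ S, P i j * ν i) + d j) :
    ((∃ x' y' : Fin n → ℝ, IsEquil P w c x' ∧ IsEquil P w c y' ∧ ∃ j ∈ S, x' j ≠ y' j) ↔
      0 < S.inf' hS.1.1 (fun i => ν i / π i) +
        S.inf' hS.1.1 (fun i => (w i - ν i) / π i)) ∧
    (0 < S.inf' hS.1.1 (fun i => ν i / π i) +
        S.inf' hS.1.1 (fun i => (w i - ν i) / π i) →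
      ∀ y : Fin n → ℝ, IsEquil P w c y → ∃ α : ℝ,
        -(S.inf' hS.1.1 fun i => ν i / π i) ≤ α ∧
        α ≤ S.inf' hS.1.1 (fun i => (w i - ν i) / π i) ∧
        ∀ j ∈ S, y j = ν j + α * π j) := by
  have hπ : IsInvariantOn P S π := hπ1
  have hbalanced : IsBalancedOn P S (blockInflow P S c x) ν := IsBalancedOn.congr hν hd
  rw [← boxParams_nontrivial_iff hS.1.1 hπ3]
  refine ⟨hx.exists_isEquil_ne_iff hP hsub hw hS hstoc hπ hπ3 hbalanced, fun hbox y hy => ?_⟩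
  obtain ⟨z, hz, hne⟩ := hx.exists_isEquil_ne hS.1 hπ hπ3 hbalanced hbox y
  obtain ⟨α, hα, hyα⟩ :=
    hx.exists_mem_boxParams_of_exists_ne hP hsub hw hS hstoc hπ hπ3 hbalanced hy hz hne
  rw [boxParams_eq_Icc hS.1.1 hπ3] at hα
  exact ⟨α, hα.1, hα.2, hyα⟩
end
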